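/- Let α ∈ (2,3), n ≥ 2, let γ₀ ∈ H^{(1+α)/2,2}(ℝ/ℤ,ℝⁿ) be injective and regular, and let h ∈ H^{(1+α)/2,2}(ℝ/ℤ,ℝⁿ). Then the directional derivative δE^α(γ₀;h) = lim_{τ→0} (E^α(γ₀+τh) − E^α(γ₀))/τ exists and δE^α(γ₀;h) = lim_{ε↘0} δE^α_ε(γ₀;h). -/

import Mathlib

open MeasureTheory Filter Set
open scoped RealInnerProductSpace ENNReal Topology

noncomputable section

/-- `ℝⁿ` -/
abbrev Rn (n : ℕ) := EuclideanSpace ℝ (Fin n)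

variable {n : ℕ}

/-- A 1-periodic curve is injective as a map on `ℝ/ℤ`. -/
def PerInjective (γ : ℝ → Rn n) : Prop :=
  ∀ u v : ℝ, γ u = γ v → ∃ k : ℤ, v = u + k

/-- `γ` is a regular curve: `γ'(u) ≠ 0` for all `u`. -/
def RegularCurve (γ : ℝ → Rn n) : Prop := ∀ u : ℝ, deriv γ u ≠ 0

/-- `γ` is parametrized by arc-length: `|γ'(u)| = 1` for all `u`. -/
def ArcLengthParam (γ : ℝ → Rn n) : Prop := ∀ u : ℝ, ‖deriv γ u‖ = 1

/-- The length `L(γ) = ∫₀¹ |γ'(θ)| dθ` of the closed curve `γ`. -/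
def curveLen (γ : ℝ → Rn n) : ℝ := ∫ θ in (0:ℝ)..1, ‖deriv γ θ‖

/-- The arc length `L(γ|_{[u,u+w]}) = |∫_u^{u+w} |γ'(θ)| dθ|`. -/
def arcLen (γ : ℝ → Rn n) (u w : ℝ) : ℝ := |∫ θ in u..(u + w), ‖deriv γ θ‖|

/-- The intrinsic distance `d_γ(u+w,u)`. -/
def idist (γ : ℝ → Rn n) (u w : ℝ) : ℝ :=
  min (arcLen γ u w) (curveLen γ - arcLen γ u w)

/-- The integrand of the O'Hara energy `E^α`. -/
def ohIntegrand (α : ℝ) (γ : ℝ → Rn n) (u w : ℝ) : ℝ :=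
  (1 / ‖γ (u + w) - γ u‖ ^ α - 1 / idist γ u w ^ α) * ‖deriv γ (u + w)‖ * ‖deriv γ u‖

/-- The O'Hara energy `E^α`, with values in `[0,∞]`. -/
def oharaE (α : ℝ) (γ : ℝ → Rn n) : ℝ≥0∞ :=
  ∫⁻ u in Ioc (0:ℝ) 1, ∫⁻ w in Ioo (-(1:ℝ)/2) (1/2), ENNReal.ofReal (ohIntegrand α γ u w)

/-- The O'Hara energy `E^α` as a real number. -/
def oharaER (α : ℝ) (γ : ℝ → Rn n) : ℝ := (oharaE α γ).toReal

/-- `[−1/2,−ε] ∪ [ε,1/2]`, the `w`-section of `U_ε`. -/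
def Wset (ε : ℝ) : Set ℝ := Icc (-(1:ℝ)/2) (-ε) ∪ Icc ε (1/2)

/-- The truncated O'Hara energy `E^α_ε`, an integral over `U_ε`. -/
def oharaEeps (α ε : ℝ) (γ : ℝ → Rn n) : ℝ :=
  ∫ u in Ioc (0:ℝ) 1, ∫ w in Wset ε, ohIntegrand α γ u w

/-- `F` has directional (Gâteaux) derivative `d` at `γ` in direction `h`. -/
def HasDirDeriv (F : (ℝ → Rn n) → ℝ) (γ h : ℝ → Rn n) (d : ℝ) : Prop :=
  Tendsto (fun τ : ℝ => (F (γ + τ • h) - F γ) / τ) (𝓝[≠] (0:ℝ)) (𝓝 d)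

/-- Squared Gagliardo seminorm `[f]²_{H^{s,2}}` of a 1-periodic map. -/
def gagliardoSq (s : ℝ) {E : Type*} [NormedAddCommGroup E] (f : ℝ → E) : ℝ≥0∞ :=
  ∫⁻ u in Ioc (0:ℝ) 1, ∫⁻ w in Ioo (-(1:ℝ)/2) (1/2),
    ENNReal.ofReal (‖f (u + w) - f u‖ ^ 2 / |w| ^ (1 + 2 * s))

/-- Membership in the fractional Sobolev space `H^{1+σ,2}(ℝ/ℤ,ℝⁿ)`, `σ ∈ (0,1)`:
a 1-periodic `C¹` function whose derivative has finite Gagliardo seminorm of order `σ`. -/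
def MemH1 (σ : ℝ) (γ : ℝ → Rn n) : Prop :=
  Function.Periodic γ 1 ∧ ContDiff ℝ 1 γ ∧ gagliardoSq σ (deriv γ) < ⊤

/-- The norm of `H^{1+σ,2}(ℝ/ℤ,ℝⁿ)`. -/
def H1Norm (σ : ℝ) (γ : ℝ → Rn n) : ℝ :=
  Real.sqrt (∫ u in Ioc (0:ℝ) 1, (‖γ u‖ ^ 2 + ‖deriv γ u‖ ^ 2)) +
    Real.sqrt ((gagliardoSq σ (deriv γ)).toReal)

/-- Membership of a 1-periodic map in `L²(ℝ/ℤ)`. -/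
def MemL2per {E : Type*} [NormedAddCommGroup E] (f : ℝ → E) : Prop :=
  Function.Periodic f 1 ∧ AEStronglyMeasurable f (volume : Measure ℝ) ∧
    IntegrableOn (fun u => ‖f u‖ ^ 2) (Ioc (0:ℝ) 1) volume

/-- Membership in the fractional Sobolev space `H^{s,2}(ℝ/ℤ)`, `s ∈ (0,1)`. -/
def MemHs0 (s : ℝ) {E : Type*} [NormedAddCommGroup E] (f : ℝ → E) : Prop :=
  MemL2per f ∧ gagliardoSq s f < ⊤

/-- The norm of `H^{s,2}(ℝ/ℤ)` for `s ∈ (0,1)`: `‖f‖_{L²} + [f]_{H^{s,2}}`. -/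
def Hs0Norm (s : ℝ) {E : Type*} [NormedAddCommGroup E] (f : ℝ → E) : ℝ :=
  Real.sqrt (∫ u in Ioc (0:ℝ) 1, ‖f u‖ ^ 2) + Real.sqrt ((gagliardoSq s f).toReal)

/-- The `k`-th Fourier coefficient (`j`-th component) of a 1-periodic curve. -/
def fCoef (γ : ℝ → Rn n) (k : ℤ) (j : Fin n) : ℂ :=
  ∫ u in (0:ℝ)..1, (γ u j : ℂ) * Complex.exp ((-2) * (Real.pi : ℂ) * Complex.I * (k : ℂ) * (u : ℂ))

/-- Membership in `H^{s,2}(ℝ/ℤ,ℝⁿ)` via the Fourier characterization: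
`((1+|k|²)^{s/2} γ̂(k))_k ∈ ℓ²`. -/
def MemHF (s : ℝ) (γ : ℝ → Rn n) : Prop :=
  Function.Periodic γ 1 ∧ Continuous γ ∧
    Summable (fun k : ℤ => (1 + (k : ℝ) ^ 2) ^ s * ∑ j, ‖fCoef γ k j‖ ^ 2)

/-- The squared Fourier norm of `H^{s,2}(ℝ/ℤ,ℝⁿ)`. -/
def fNormSq (s : ℝ) (γ : ℝ → Rn n) : ℝ :=
  ∑' k : ℤ, (1 + (k : ℝ) ^ 2) ^ s * ∑ j, ‖fCoef γ k j‖ ^ 2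

/-- C¹-norm of a 1-periodic map. -/
def c1Norm (f : ℝ → Rn n) : ℝ := ⨆ u : Icc (0:ℝ) 1, (‖f u.1‖ + ‖deriv f u.1‖)

/-- The integrand of `Q(γ,h)`. -/
def Qintegrand (α : ℝ) (γ h : ℝ → Rn n) (u w : ℝ) : ℝ :=
  ⟪deriv γ u, deriv h u⟫ / |w| ^ α
    - ⟪γ (u + w) - γ u, h (u + w) - h u⟫ / |w| ^ (α + 2)

/-- The integrand of `R(γ,h)`. -/
def Rintegrand (α : ℝ) (γ h : ℝ → Rn n) (u w : ℝ) : ℝ :=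
  2 * ⟪deriv γ u, deriv h u⟫ * (1 / ‖γ (u + w) - γ u‖ ^ α - 1 / |w| ^ α)
    - α * ⟪γ (u + w) - γ u, h (u + w) - h u⟫ *
        (1 / ‖γ (u + w) - γ u‖ ^ (α + 2) - 1 / |w| ^ (α + 2))

/-- `R(γ,h)`, an absolutely convergent double integral over `(ℝ/ℤ) × [−1/2,1/2]`. -/
def Rval (α : ℝ) (γ h : ℝ → Rn n) : ℝ :=
  ∫ p in (Ioc (0:ℝ) 1) ×ˢ (Icc (-(1:ℝ)/2) (1/2)), Rintegrand α γ h p.1 p.2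

/-!
On a segment from `u` to `u + w` the integrand compares two negative powers of means: the chord is
`|w|` times the norm of the mean velocity, the arc is `|w|` times the mean speed. The difference
`(mean speed)² - ‖mean velocity‖²` is the average of the Cauchy–Schwarz defects
`‖x‖ * ‖y‖ - ⟪x, y⟫` over pairs of velocities, and such a defect is quadratic in `x - y`. Hence it
is bounded, together with its increments in `τ` along `γ + τ • h`, by the mean squared oscillation
of `(γ', h')` on the segment. Divided by `|w| ^ α` this oscillation is integrable, its integral
being controlled by the Gagliardo seminorms of `γ'` and `h'`, so that the difference quotients of
the integrand have an integrable majorant that does not depend on `τ`.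

For almost every `(u, w)` the two arcs between `u` and `u + w` have different lengths; the intrinsic
distance is then locally the length of one of them and the integrand is differentiable in `τ`.
Dominated convergence differentiates the energy and every truncated energy under the integral sign,
and letting the truncated domains exhaust the full one gives the limit.
-/

/-- A Lipschitz condition at the parameter `0`: the same constant bounds the value at `0` and the
increments from `0`, so that the condition is stable under products and integrals. -/
structure LipBound {E : Type*} [NormedAddCommGroup E] (r M : ℝ) (a : ℝ → E) : Prop where
  norm_zero_le : ‖a 0‖ ≤ M
  norm_sub_le : ∀ τ, |τ| ≤ r → ‖a τ - a 0‖ ≤ M * |τ|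

namespace LipBound

section NormedGroup

variable {E : Type*} [NormedAddCommGroup E] {r M N : ℝ} {a b : ℝ → E}

lemma nonneg (ha : LipBound r M a) : 0 ≤ M := (norm_nonneg _).trans ha.norm_zero_le

lemma mono (ha : LipBound r M a) (hMN : M ≤ N) : LipBound r N a :=
  ⟨ha.norm_zero_le.trans hMN, fun τ hτ => (ha.norm_sub_le τ hτ).trans (by gcongr)⟩

lemma norm_le (ha : LipBound r M a) (hr : r ≤ 1) {τ : ℝ} (hτ : |τ| ≤ r) : ‖a τ‖ ≤ 2 * M :=
  calc ‖a τ‖ ≤ ‖a 0‖ + ‖a τ - a 0‖ := norm_le_norm_add_norm_sub' _ _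
    _ ≤ M + M * 1 := add_le_add ha.norm_zero_le <| (ha.norm_sub_le τ hτ).trans <|
        mul_le_mul_of_nonneg_left (hτ.trans hr) ha.nonneg
    _ = 2 * M := by ring

lemma congr (hr : 0 ≤ r) (ha : LipBound r M a) (hab : ∀ τ, |τ| ≤ r → b τ = a τ) :
    LipBound r M b := by
  have h0 : b 0 = a 0 := hab 0 (by simpa using hr)
  exact ⟨h0 ▸ ha.norm_zero_le, fun τ hτ => by rw [hab τ hτ, h0]; exact ha.norm_sub_le τ hτ⟩

protected lemma add (ha : LipBound r M a) (hb : LipBound r N b) :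
    LipBound r (M + N) (fun τ => a τ + b τ) where
  norm_zero_le := (norm_add_le _ _).trans (add_le_add ha.norm_zero_le hb.norm_zero_le)
  norm_sub_le τ hτ := by
    rw [add_sub_add_comm, add_mul]
    exact (norm_add_le _ _).trans (add_le_add (ha.norm_sub_le τ hτ) (hb.norm_sub_le τ hτ))

protected lemma sub (ha : LipBound r M a) (hb : LipBound r N b) :
    LipBound r (M + N) (fun τ => a τ - b τ) where
  norm_zero_le := (_root_.norm_sub_le _ _).trans (add_le_add ha.norm_zero_le hb.norm_zero_le)
  norm_sub_le τ hτ := by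
    rw [sub_sub_sub_comm, add_mul]
    exact (_root_.norm_sub_le _ _).trans (add_le_add (ha.norm_sub_le τ hτ) (hb.norm_sub_le τ hτ))

protected lemma norm (ha : LipBound r M a) : LipBound r M (fun τ => ‖a τ‖) where
  norm_zero_le := (norm_norm (a 0)).le.trans ha.norm_zero_le
  norm_sub_le τ hτ := (abs_norm_sub_norm_le _ _).trans (ha.norm_sub_le τ hτ)

lemma const_smul [NormedSpace ℝ E] (ha : LipBound r M a) (k : ℝ) :
    LipBound r (|k| * M) (fun τ => k • a τ) where
  norm_zero_le := by
    rw [norm_smul, Real.norm_eq_abs]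
    exact mul_le_mul_of_nonneg_left ha.norm_zero_le (abs_nonneg k)
  norm_sub_le τ hτ := by
    rw [← smul_sub, norm_smul, Real.norm_eq_abs, mul_assoc]
    exact mul_le_mul_of_nonneg_left (ha.norm_sub_le τ hτ) (abs_nonneg k)

lemma affine [NormedSpace ℝ E] {x y : E} (hx : ‖x‖ ≤ M) (hy : ‖y‖ ≤ M) :
    LipBound r M (fun τ => x + τ • y) where
  norm_zero_le := by simpa using hx
  norm_sub_le τ _ := by
    rw [zero_smul, add_zero, add_sub_cancel_left, norm_smul, Real.norm_eq_abs, mul_comm]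
    gcongr

end NormedGroup

section Inner

variable {E : Type*} [NormedAddCommGroup E] [InnerProductSpace ℝ E] {r M N : ℝ}

protected lemma inner {a b : ℝ → E} (hr : r ≤ 1) (ha : LipBound r M a) (hb : LipBound r N b) :
    LipBound r (3 * M * N) (fun τ => ⟪a τ, b τ⟫) where
  norm_zero_le :=
    calc ‖⟪a 0, b 0⟫‖ ≤ M * N := (norm_inner_le_norm _ _).trans <|
          mul_le_mul ha.norm_zero_le hb.norm_zero_le (norm_nonneg _) ha.nonneg
      _ ≤ 3 * M * N := by nlinarith [mul_nonneg ha.nonneg hb.nonneg]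
  norm_sub_le τ hτ :=
    calc ‖⟪a τ, b τ⟫ - ⟪a 0, b 0⟫‖ = ‖⟪a τ - a 0, b τ⟫ + ⟪a 0, b τ - b 0⟫‖ := by
          rw [inner_sub_left, inner_sub_right, sub_add_sub_cancel]
      _ ≤ ‖a τ - a 0‖ * ‖b τ‖ + ‖a 0‖ * ‖b τ - b 0‖ := (norm_add_le _ _).trans <|
          add_le_add (norm_inner_le_norm _ _) (norm_inner_le_norm _ _)
      _ ≤ (M * |τ|) * (2 * N) + M * (N * |τ|) := by
          have hM := ha.nonneg
          gcongr
          exacts [ha.norm_sub_le τ hτ, hb.norm_le hr hτ, ha.norm_zero_le, hb.norm_sub_le τ hτ]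
      _ = 3 * M * N * |τ| := by ring

protected lemma mul {a b : ℝ → ℝ} (hr : r ≤ 1) (ha : LipBound r M a) (hb : LipBound r N b) :
    LipBound r (3 * M * N) (fun τ => a τ * b τ) := by
  simpa only [Real.inner_apply, conj_trivial] using ha.inner hr hb

end Inner

protected lemma min {r M : ℝ} {a b : ℝ → ℝ} (ha : LipBound r M a) (hb : LipBound r M b) :
    LipBound r M (fun τ => min (a τ) (b τ)) where
  norm_zero_le := abs_min_le_max_abs_abs.trans (max_le ha.norm_zero_le hb.norm_zero_le)
  norm_sub_le τ hτ := (abs_min_sub_min_le_max _ _ _ _).trans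
    (max_le (ha.norm_sub_le τ hτ) (hb.norm_sub_le τ hτ))

section Integral

variable {E X : Type*} [NormedAddCommGroup E] [MeasurableSpace X] {μ : Measure X} {r : ℝ}
  {F : ℝ → X → E} {bound : X → ℝ}

lemma integrable {τ : ℝ} (hF : AEStronglyMeasurable (F τ) μ) (hbound : Integrable bound μ)
    (hlip : ∀ᵐ x ∂μ, LipBound r (bound x) (F · x)) (hτ : |τ| ≤ r) : Integrable (F τ) μ := by
  refine (hbound.mul_const (1 + |τ|)).mono' hF ?_
  filter_upwards [hlip] with x hx
  calc ‖F τ x‖ ≤ ‖F 0 x‖ + ‖F τ x - F 0 x‖ := norm_le_norm_add_norm_sub' _ _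
    _ ≤ bound x + bound x * |τ| := add_le_add hx.norm_zero_le (hx.norm_sub_le τ hτ)
    _ = bound x * (1 + |τ|) := by ring

protected lemma integral [NormedSpace ℝ E] (hF : ∀ τ, AEStronglyMeasurable (F τ) μ)
    (hbound : Integrable bound μ) (hlip : ∀ᵐ x ∂μ, LipBound r (bound x) (F · x)) :
    LipBound r (∫ x, bound x ∂μ) (fun τ => ∫ x, F τ x ∂μ) where
  norm_zero_le := norm_integral_le_of_norm_le hbound (hlip.mono fun _ hx => hx.norm_zero_le)
  norm_sub_le τ hτ := by
    have h0 : |(0 : ℝ)| ≤ r := by simpa using (abs_nonneg τ).trans hτ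
    rw [← integral_sub (integrable (hF τ) hbound hlip hτ) (integrable (hF 0) hbound hlip h0),
      ← integral_mul_const]
    exact norm_integral_le_of_norm_le (hbound.mul_const _)
      (hlip.mono fun _ hx => hx.norm_sub_le τ hτ)

end Integral

lemma rpow_neg {r m M β : ℝ} {x : ℝ → ℝ} (hm : 0 < m) (hβ : 0 ≤ β) (hr : 0 ≤ r)
    (hx : LipBound r M x) (hmx : ∀ τ, |τ| ≤ r → m ≤ x τ) :
    LipBound r (m ^ (-β) + β * m ^ (-β - 1) * M) (fun τ => x τ ^ (-β)) := by
  have h0 : m ≤ x 0 := hmx 0 (by simpa using hr)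
  have hM : 0 ≤ M := hx.nonneg
  refine ⟨?_, fun τ hτ => ?_⟩
  · rw [Real.norm_of_nonneg (Real.rpow_nonneg (hm.le.trans h0) _)]
    have := Real.rpow_le_rpow_of_nonpos hm h0 (neg_nonpos.2 hβ)
    have : 0 ≤ β * m ^ (-β - 1) * M := by positivity
    linarith
  · have hlip : ‖x τ ^ (-β) - x 0 ^ (-β)‖ ≤ β * m ^ (-β - 1) * ‖x τ - x 0‖ := by
      refine Convex.norm_image_sub_le_of_norm_hasDerivWithin_le (s := Ici m)
        (f := fun z : ℝ => z ^ (-β)) (f' := fun z => -β * z ^ (-β - 1)) (fun z hz => ?_)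
        (fun z hz => ?_) (convex_Ici m) h0 (hmx τ hτ)
      · exact (Real.hasDerivAt_rpow_const (Or.inl (hm.trans_le hz).ne')).hasDerivWithinAt
      · rw [norm_mul, norm_neg, Real.norm_of_nonneg hβ,
          Real.norm_of_nonneg (Real.rpow_nonneg (hm.le.trans hz) _)]
        exact mul_le_mul_of_nonneg_left (Real.rpow_le_rpow_of_nonpos hm hz (by linarith)) hβ
    calc ‖x τ ^ (-β) - x 0 ^ (-β)‖ ≤ β * m ^ (-β - 1) * (M * |τ|) :=
          hlip.trans (mul_le_mul_of_nonneg_left (hx.norm_sub_le τ hτ) (by positivity))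
      _ ≤ (m ^ (-β) + β * m ^ (-β - 1) * M) * |τ| := by
          rw [← mul_assoc]
          gcongr
          exact le_add_of_nonneg_left (Real.rpow_nonneg hm.le _)

end LipBound

lemma rpow_neg_sub_rpow_neg_eq_integral {x y : ℝ} (hx : 0 < x) (hy : 0 < y) (β : ℝ) :
    x ^ (-β) - y ^ (-β) =
      (y - x) * ∫ t in (0 : ℝ)..1, β * (x + t * (y - x)) ^ (-(β + 1)) := by
  have hpos : ∀ t ∈ Icc (0 : ℝ) 1, 0 < x + t * (y - x) := fun t ht => by
    rcases ht with ⟨h0, h1⟩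
    rcases h0.eq_or_lt with rfl | h0 <;> nlinarith
  have hderiv : ∀ t ∈ Icc (0 : ℝ) 1,
      HasDerivAt (fun z => -z ^ (-β)) (β * (x + t • (y - x)) ^ (-(β + 1))) (x + t • (y - x)) :=
    fun t ht => by
      have := (Real.hasDerivAt_rpow_const (p := -β) (Or.inl (hpos t ht).ne')).neg
      rwa [neg_mul, neg_neg, ← neg_add'] at this
  have hcont : ContinuousOn (fun t : ℝ => β * (x + t • (y - x)) ^ (-(β + 1))) (Icc 0 1) := by
    refine continuousOn_const.mul (ContinuousOn.rpow_const (by fun_prop) fun t ht => ?_)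
    exact Or.inl (hpos t ht).ne'
  have := intervalIntegral.integral_unitInterval_deriv_eq_sub
    (f := fun z : ℝ => -z ^ (-β)) (f' := fun z => β * z ^ (-(β + 1))) hcont hderiv
  simp only [smul_eq_mul, add_sub_cancel] at this
  linarith

lemma LipBound.rpow_neg_sub_rpow_neg {r m M N β : ℝ} {x y : ℝ → ℝ} (hm : 0 < m) (hβ : 0 ≤ β)
    (hr : 0 ≤ r) (hr1 : r ≤ 1) (hx : LipBound r M x) (hy : LipBound r M y)
    (hxy : LipBound r N (fun τ => y τ - x τ)) (hmx : ∀ τ, |τ| ≤ r → m ≤ x τ)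
    (hmy : ∀ τ, |τ| ≤ r → m ≤ y τ) :
    LipBound r (3 * N * (β * (m ^ (-(β + 1)) + (β + 1) * m ^ (-(β + 1) - 1) * M)))
      (fun τ => x τ ^ (-β) - y τ ^ (-β)) := by
  set C := β * (m ^ (-(β + 1)) + (β + 1) * m ^ (-(β + 1) - 1) * M)
  have hkernel : LipBound r C
      (fun τ => ∫ t in Icc (0 : ℝ) 1, β * (x τ + t * (y τ - x τ)) ^ (-(β + 1))) := by
    have hbound : ∫ _ in Icc (0 : ℝ) 1, C = C := by simp
    rw [← hbound]
    refine LipBound.integral (fun τ => ?_) (integrable_const C)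
      ((ae_restrict_iff' measurableSet_Icc).2 (Eventually.of_forall fun t ht => ?_))
    · exact (((measurable_id.mul_const _).const_add _).pow_const _
        |>.const_mul β).aestronglyMeasurable
    · have hseg : LipBound r M (fun τ => x τ + t * (y τ - x τ)) := by
        have := (hx.const_smul (1 - t)).add (hy.const_smul t)
        rw [abs_of_nonneg (sub_nonneg.2 ht.2), abs_of_nonneg ht.1, ← add_mul, sub_add_cancel,
          one_mul] at this
        exact this.congr hr fun τ _ => by simp only [smul_eq_mul]; ring
      have hmseg : ∀ τ, |τ| ≤ r → m ≤ x τ + t * (y τ - x τ) := fun τ hτ => by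
        nlinarith [hmx τ hτ, hmy τ hτ, ht.1, ht.2]
      have := (rpow_neg hm (by linarith : 0 ≤ β + 1) hr hseg hmseg).const_smul β
      rwa [abs_of_nonneg hβ] at this
  refine (hxy.mul hr1 hkernel).congr hr fun τ hτ => ?_
  rw [rpow_neg_sub_rpow_neg_eq_integral (hm.trans_le (hmx τ hτ)) (hm.trans_le (hmy τ hτ)),
    intervalIntegral.integral_of_le zero_le_one, integral_Icc_eq_integral_Ioc]

lemma integrable_deriv_and_hasDerivAt_integral_of_lipBound {X : Type*} [MeasurableSpace X]
    {μ : Measure X} {F : ℝ → X → ℝ} {bound : X → ℝ} {r : ℝ} (hr : 0 < r)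
    (hF : ∀ τ, AEStronglyMeasurable (F τ) μ) (hbound : Integrable bound μ)
    (hlip : ∀ᵐ x ∂μ, LipBound r (bound x) (F · x))
    (hdiff : ∀ᵐ x ∂μ, DifferentiableAt ℝ (F · x) 0) :
    Integrable (fun x => deriv (F · x) 0) μ ∧
      HasDerivAt (fun τ => ∫ x, F τ x ∂μ) (∫ x, deriv (F · x) 0 ∂μ) 0 := by
  have hderiv : ∀ᵐ x ∂μ, HasDerivAt (F · x) (deriv (F · x) 0) 0 :=
    hdiff.mono fun _ hx => hx.hasDerivAt
  have hmeas : AEStronglyMeasurable (fun x => deriv (F · x) 0) μ := by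
    refine aestronglyMeasurable_of_tendsto_ae (𝓝[≠] (0 : ℝ))
      (f := fun τ x => τ⁻¹ • (F τ x - F 0 x)) (fun τ => ((hF τ).sub (hF 0)).const_smul τ⁻¹) ?_
    filter_upwards [hderiv] with x hx
    simpa only [zero_add] using hx.tendsto_slope_zero
  have hincr : ∀ᵐ x ∂μ, ∀ τ ∈ Metric.closedBall (0 : ℝ) r,
      ‖F τ x - F 0 x‖ ≤ bound x * ‖τ - 0‖ :=
    hlip.mono fun x hx τ hτ => by
      simpa using hx.norm_sub_le τ (by simpa using hτ)
  obtain ⟨hint, hfderiv⟩ := hasFDerivAt_integral_of_dominated_loc_of_lip'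
    (F' := fun x => ContinuousLinearMap.toSpanSingleton ℝ (deriv (F · x) 0))
    (Metric.closedBall_mem_nhds 0 hr) (fun τ _ => hF τ)
    (LipBound.integrable (hF 0) hbound hlip (by simpa using hr.le))
    ((ContinuousLinearMap.toSpanSingletonCLE (𝕜 := ℝ) (E := ℝ)).continuous
      |>.comp_aestronglyMeasurable hmeas)
    hincr hbound (hderiv.mono fun _ hx => hx.hasFDerivAt)
  refine ⟨by simpa using hint.apply_continuousLinearMap 1, ?_⟩
  simpa [ContinuousLinearMap.integral_apply hint] using hfderiv.hasDerivAt

section CauchySchwarzDefect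

variable {E : Type*} [NormedAddCommGroup E] [InnerProductSpace ℝ E]

/-- The defect in the Cauchy–Schwarz inequality. -/
def csDefect (a b : E) : ℝ := ‖a‖ * ‖b‖ - ⟪a, b⟫

lemma csDefect_eq (a b : E) : csDefect a b = (‖a - b‖ ^ 2 - (‖a‖ - ‖b‖) ^ 2) / 2 := by
  rw [csDefect, norm_sub_sq_real]; ring

lemma norm_sub_norm_eq (a b : E) :
    ‖a‖ - ‖b‖ = ⟪a - b, a + b⟫ * (‖a‖ + ‖b‖) ^ (-(1 : ℝ)) := by
  have hinner : ⟪a - b, a + b⟫ = (‖a‖ - ‖b‖) * (‖a‖ + ‖b‖) := by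
    rw [inner_sub_left, inner_add_right, inner_add_right, real_inner_comm a b,
      real_inner_self_eq_norm_sq, real_inner_self_eq_norm_sq]
    ring
  rw [hinner, Real.rpow_neg_one]
  rcases eq_or_ne (‖a‖ + ‖b‖) 0 with h | h
  · have ha : ‖a‖ = 0 := by linarith [norm_nonneg a, norm_nonneg b]
    have hb : ‖b‖ = 0 := by linarith
    simp [ha, hb]
  · rw [mul_inv_cancel_right₀ h]

lemma exists_lipBound_norm_sub_norm {c : ℝ} (hc : 0 < c) (K : ℝ) :
    ∃ C, ∀ {r δ : ℝ} {a b : ℝ → E}, 0 ≤ r → r ≤ 1 → LipBound r K a → LipBound r K b →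
      LipBound r δ (fun τ => a τ - b τ) → (∀ τ, |τ| ≤ r → c ≤ ‖a τ‖) →
      LipBound r (C * δ) (fun τ => ‖a τ‖ - ‖b τ‖) := by
  set I := c ^ (-(1 : ℝ)) + 1 * c ^ (-(1 : ℝ) - 1) * (K + K)
  refine ⟨3 * (3 * (K + K)) * I, fun {r δ a b} hr hr1 ha hb hab hca => ?_⟩
  have hinv : LipBound r I (fun τ => (‖a τ‖ + ‖b τ‖) ^ (-(1 : ℝ))) :=
    (ha.norm.add hb.norm).rpow_neg hc zero_le_one hr fun τ hτ =>
      (hca τ hτ).trans (le_add_of_nonneg_right (norm_nonneg _))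
  have hprod := (hab.inner hr1 (ha.add hb)).mul hr1 hinv
  exact (hprod.congr hr fun τ _ => norm_sub_norm_eq _ _).mono (by ring_nf; rfl)

lemma exists_lipBound_csDefect {c : ℝ} (hc : 0 < c) (K : ℝ) :
    ∃ C, ∀ {r δ : ℝ} {a b : ℝ → E}, 0 ≤ r → r ≤ 1 → LipBound r K a → LipBound r K b →
      LipBound r δ (fun τ => a τ - b τ) → (∀ τ, |τ| ≤ r → c ≤ ‖a τ‖) →
      LipBound r (C * δ ^ 2) (fun τ => csDefect (a τ) (b τ)) := by
  obtain ⟨D, hD⟩ := exists_lipBound_norm_sub_norm (E := E) hc K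
  refine ⟨2⁻¹ * (3 + 3 * D ^ 2), fun {r δ a b} hr hr1 ha hb hab hca => ?_⟩
  have hdiff := hD hr hr1 ha hb hab hca
  have hsq := ((hab.norm.mul hr1 hab.norm).sub (hdiff.mul hr1 hdiff)).const_smul 2⁻¹
  refine (hsq.congr hr fun τ _ => ?_).mono ?_
  · rw [csDefect_eq, smul_eq_mul]; ring
  · rw [abs_of_pos (by norm_num)]; ring_nf; rfl

lemma sq_integral_norm_sub_sq_norm_integral [CompleteSpace E] {X : Type*} [MeasurableSpace X]
    {μ : Measure X} [SFinite μ] {F : X → E} (hF : Integrable F μ) :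
    (∫ s, ‖F s‖ ∂μ) ^ 2 - ‖∫ s, F s ∂μ‖ ^ 2 =
      ∫ q, csDefect (F q.1) (F q.2) ∂(μ.prod μ) := by
  have hnorm : Integrable (fun q : X × X => ‖F q.1‖ * ‖F q.2‖) (μ.prod μ) :=
    hF.norm.mul_prod hF.norm
  have hinner : Integrable (fun q : X × X => ⟪F q.1, F q.2⟫) (μ.prod μ) :=
    hnorm.mono' (hF.aestronglyMeasurable.comp_fst.inner hF.aestronglyMeasurable.comp_snd)
      (Eventually.of_forall fun _ => norm_inner_le_norm _ _)
  have hiter : ∫ q, ⟪F q.1, F q.2⟫ ∂(μ.prod μ) = ‖∫ s, F s ∂μ‖ ^ 2 :=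
    calc ∫ q, ⟪F q.1, F q.2⟫ ∂(μ.prod μ) = ∫ s, ⟪∫ t, F t ∂μ, F s⟫ ∂μ := by
          rw [integral_prod _ hinner]
          simp only [integral_inner hF, real_inner_comm]
      _ = ‖∫ s, F s ∂μ‖ ^ 2 := by rw [integral_inner hF, real_inner_self_eq_norm_sq]
  simp only [csDefect]
  rw [integral_sub hnorm hinner, integral_prod_mul (fun s => ‖F s‖) (fun t => ‖F t‖), hiter, sq]

end CauchySchwarzDefect

section SegmentMean

variable {E : Type*} [NormedAddCommGroup E]

lemma integrableOn_unitSquare {F : ℝ × ℝ → E} (hF : Continuous F) :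
    IntegrableOn F (Icc (0 : ℝ) 1 ×ˢ Icc (0 : ℝ) 1) :=
  hF.continuousOn.integrableOn_compact (isCompact_Icc.prod isCompact_Icc)

/-- The mean of `v` over the (possibly reversed) segment from `u` to `u + w`. -/
def segMean [NormedSpace ℝ E] (v : ℝ → E) (u w : ℝ) : E := ∫ s in Icc (0 : ℝ) 1, v (u + s * w)

/-- The mean squared oscillation of `f` over the segment from `u` to `u + w`. -/
def meanSqOsc (f : ℝ → E) (u w : ℝ) : ℝ :=
  ∫ q in Icc (0 : ℝ) 1 ×ˢ Icc (0 : ℝ) 1, ‖f (u + q.1 * w) - f (u + q.2 * w)‖ ^ 2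

lemma meanSqOsc_nonneg (f : ℝ → E) (u w : ℝ) : 0 ≤ meanSqOsc f u w :=
  integral_nonneg fun _ => sq_nonneg _

lemma continuous_meanSqOsc {f : ℝ → E} (hf : Continuous f) :
    Continuous (fun p : ℝ × ℝ => meanSqOsc f p.1 p.2) :=
  continuous_parametric_integral_of_continuous (by fun_prop) (isCompact_Icc.prod isCompact_Icc)

lemma segMean_norm_nonneg (v : ℝ → E) (u w : ℝ) : 0 ≤ segMean (fun x => ‖v x‖) u w :=
  integral_nonneg fun _ => norm_nonneg _

variable [NormedSpace ℝ E]

lemma continuous_segMean {v : ℝ → E} (hv : Continuous v) :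
    Continuous (fun p : ℝ × ℝ => segMean v p.1 p.2) :=
  continuous_parametric_integral_of_continuous (by fun_prop) isCompact_Icc

lemma segMean_zero [CompleteSpace E] (v : ℝ → E) (u : ℝ) : segMean v u 0 = v u := by
  simp [segMean]

lemma norm_segMean_le (v : ℝ → E) (u w : ℝ) : ‖segMean v u w‖ ≤ segMean (fun x => ‖v x‖) u w :=
  norm_integral_le_integral_norm _

lemma le_segMean {v : ℝ → ℝ} {c : ℝ} (hv : Continuous v) (hc : ∀ x, c ≤ v x) (u w : ℝ) :
    c ≤ segMean v u w :=
  calc c = ∫ _ in Icc (0 : ℝ) 1, c := by simp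
    _ ≤ segMean v u w := integral_mono (integrable_const c)
        (by fun_prop : Continuous fun s => v (u + s * w)).integrableOn_Icc fun s => hc _

lemma smul_segMean (v : ℝ → E) (u w : ℝ) : w • segMean v u w = ∫ θ in u..(u + w), v θ := by
  have := intervalIntegral.smul_integral_comp_add_mul (a := 0) (b := 1) v w u
  simpa only [zero_mul, add_zero, one_mul, segMean, integral_Icc_eq_integral_Ioc,
    ← intervalIntegral.integral_of_le zero_le_one, mul_comm w] using this

lemma LipBound.segMean {r M : ℝ} {v : ℝ → ℝ → E} (hv : ∀ τ, Continuous (v τ))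
    (hM : ∀ x, LipBound r M (v · x)) (u w : ℝ) :
    LipBound r M (fun τ => segMean (v τ) u w) := by
  have hmean : ∫ _ in Icc (0 : ℝ) 1, M = M := by simp
  rw [← hmean]
  exact LipBound.integral
    (fun τ => ((hv τ).comp (by fun_prop : Continuous fun s => u + s * w)).aestronglyMeasurable)
    (integrable_const M) (Eventually.of_forall fun s => hM _)

end SegmentMean

lemma sq_segMean_norm_sub_sq_norm_segMean {E : Type*} [NormedAddCommGroup E]
    [InnerProductSpace ℝ E] [CompleteSpace E] {v : ℝ → E} (hv : Continuous v) (u w : ℝ) :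
    segMean (fun x => ‖v x‖) u w ^ 2 - ‖segMean v u w‖ ^ 2 =
      ∫ q in Icc (0 : ℝ) 1 ×ˢ Icc (0 : ℝ) 1, csDefect (v (u + q.1 * w)) (v (u + q.2 * w)) := by
  have hint : IntegrableOn (fun s => v (u + s * w)) (Icc 0 1) :=
    (by fun_prop : Continuous fun s => v (u + s * w)).integrableOn_Icc
  rw [Measure.volume_eq_prod, ← Measure.prod_restrict]
  exact sq_integral_norm_sub_sq_norm_integral hint

lemma exists_lipBound_sq_segMean_norm_sub_sq_norm_segMean {E : Type*} [NormedAddCommGroup E]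
    [InnerProductSpace ℝ E] [CompleteSpace E] {c : ℝ} (hc : 0 < c) (K : ℝ) :
    ∃ C, ∀ {r : ℝ} {f g : ℝ → E}, 0 ≤ r → r ≤ 1 → Continuous f → Continuous g →
      (∀ x, ‖f x‖ ≤ K) → (∀ x, ‖g x‖ ≤ K) → (∀ τ, |τ| ≤ r → ∀ x, c ≤ ‖f x + τ • g x‖) →
      ∀ u w, LipBound r (C * meanSqOsc (fun x => (f x, g x)) u w) (fun τ =>
        segMean (fun x => ‖f x + τ • g x‖) u w ^ 2 -
          ‖segMean (fun x => f x + τ • g x) u w‖ ^ 2) := by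
  obtain ⟨C, hC⟩ := exists_lipBound_csDefect (E := E) hc K
  refine ⟨C, fun {r f g} hr hr1 hf hg hfK hgK hfg u w => ?_⟩
  have hosc : IntegrableOn (fun q : ℝ × ℝ => C *
      ‖(f (u + q.1 * w), g (u + q.1 * w)) - (f (u + q.2 * w), g (u + q.2 * w))‖ ^ 2)
      (Icc 0 1 ×ˢ Icc 0 1) :=
    integrableOn_unitSquare (by fun_prop)
  have hpoint : ∀ x y, LipBound r (C * ‖(f x, g x) - (f y, g y)‖ ^ 2)
      (fun τ => csDefect (f x + τ • g x) (f y + τ • g y)) := fun x y => by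
    refine hC hr hr1 (.affine (hfK x) (hgK x)) (.affine (hfK y) (hgK y)) ?_
      fun τ hτ => hfg τ hτ x
    refine (LipBound.affine (norm_fst_le ((f x, g x) - (f y, g y)))
      (norm_snd_le ((f x, g x) - (f y, g y)))).congr hr fun τ _ => ?_
    simp only [Prod.mk_sub_mk, smul_sub]; abel
  have hint := LipBound.integral (μ := volume.restrict (Icc (0 : ℝ) 1 ×ˢ Icc (0 : ℝ) 1))
    (F := fun τ q => csDefect (f (u + q.1 * w) + τ • g (u + q.1 * w))
      (f (u + q.2 * w) + τ • g (u + q.2 * w)))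
    (fun τ => by unfold csDefect; exact (by fun_prop : Continuous _).aestronglyMeasurable)
    hosc (Eventually.of_forall fun q => hpoint _ _)
  rw [integral_const_mul] at hint
  exact hint.congr hr fun τ _ =>
    sq_segMean_norm_sub_sq_norm_segMean (v := fun x => f x + τ • g x) (by fun_prop) u w

section Gagliardo

lemma lintegral_Ioc_comp_add_of_periodic {F : ℝ → ℝ≥0∞} (hF : Function.Periodic F 1) (c : ℝ) :
    ∫⁻ u in Ioc (0 : ℝ) 1, F (u + c) = ∫⁻ u in Ioc (0 : ℝ) 1, F u := by
  have hpre : (· + c) ⁻¹' Ioc c (c + 1) = Ioc (0 : ℝ) 1 := by simp [add_comm]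
  calc ∫⁻ u in Ioc (0 : ℝ) 1, F (u + c) = ∫⁻ u in Ioc c (c + 1), F u := by
        rw [← hpre]
        exact (measurePreserving_add_right volume c).setLIntegral_comp_preimage_emb
          (measurableEmbedding_addRight c) F _
    _ = ∫⁻ u in Ioc (0 : ℝ) (0 + 1), F u :=
        (isAddFundamentalDomain_Ioc one_pos c).setLIntegral_eq
          (isAddFundamentalDomain_Ioc one_pos 0) F hF.map_vadd_zmultiples
    _ = ∫⁻ u in Ioc (0 : ℝ) 1, F u := by rw [zero_add]

lemma setLIntegral_Ioo_comp_mul_le {g : ℝ → ℝ≥0∞} (hg : Measurable g) {l a : ℝ} (hl : l ≠ 0)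
    (hl1 : |l| ≤ 1) :
    ∫⁻ w in Ioo (-a) a, g (l * w) ≤ ENNReal.ofReal |l|⁻¹ * ∫⁻ w in Ioo (-a) a, g w := by
  have hmaps : Ioo (-a) a ⊆ (l * ·) ⁻¹' Ioo (-a) a := fun w hw => by
    rw [mem_Ioo, ← abs_lt] at hw
    rw [mem_preimage, mem_Ioo, ← abs_lt, abs_mul]
    exact (mul_le_of_le_one_left (abs_nonneg w) hl1).trans_lt hw
  calc ∫⁻ w in Ioo (-a) a, g (l * w) ≤ ∫⁻ w in (l * ·) ⁻¹' Ioo (-a) a, g (l * w) :=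
        lintegral_mono_set hmaps
    _ = ENNReal.ofReal |l|⁻¹ * ∫⁻ w in Ioo (-a) a, g w := by
        rw [← setLIntegral_map measurableSet_Ioo hg (measurable_const_mul l),
          Real.map_volume_mul_left hl, Measure.restrict_smul, lintegral_smul_measure, abs_inv,
          smul_eq_mul]

variable {E : Type*} [NormedAddCommGroup E] {f : ℝ → E}

lemma measurable_sq_norm_sub_div {X : Type*} [TopologicalSpace X] [MeasurableSpace X]
    [OpensMeasurableSpace X] {φ ψ : X → E} {ω : X → ℝ} (hφ : Continuous φ) (hψ : Continuous ψ)
    (hω : Continuous ω) (p : ℝ) :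
    Measurable (fun x => ENNReal.ofReal (‖φ x - ψ x‖ ^ 2 / |ω x| ^ p)) :=
  ((hφ.sub hψ).norm.pow 2).measurable.div (hω.abs.measurable.pow_const p) |>.ennreal_ofReal

lemma lintegral_dilated_diff_le (hf : Continuous f) {σ : ℝ} (hσ : 0 ≤ σ) {l : ℝ} (hl : |l| ≤ 1)
    (u : ℝ) :
    ∫⁻ w in Ioo (-(1 : ℝ) / 2) (1 / 2),
        ENNReal.ofReal (‖f (u + l * w) - f u‖ ^ 2 / |w| ^ (1 + 2 * σ)) ≤
      ∫⁻ w in Ioo (-(1 : ℝ) / 2) (1 / 2),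
        ENNReal.ofReal (‖f (u + w) - f u‖ ^ 2 / |w| ^ (1 + 2 * σ)) := by
  rcases eq_or_ne l 0 with rfl | hl0
  · simp
  set g : ℝ → ℝ≥0∞ := fun w => ENNReal.ofReal (‖f (u + w) - f u‖ ^ 2 / |w| ^ (1 + 2 * σ))
  have hg : Measurable g :=
    measurable_sq_norm_sub_div (by fun_prop) continuous_const continuous_id _
  have hpos : 0 < |l| ^ (1 + 2 * σ) := Real.rpow_pos_of_pos (abs_pos.2 hl0) _
  have hscale : ∀ w, ENNReal.ofReal (‖f (u + l * w) - f u‖ ^ 2 / |w| ^ (1 + 2 * σ)) =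
      ENNReal.ofReal (|l| ^ (1 + 2 * σ)) * g (l * w) := fun w => by
    rw [← ENNReal.ofReal_mul hpos.le, abs_mul, Real.mul_rpow (abs_nonneg _) (abs_nonneg _),
      mul_div_assoc', mul_div_mul_left _ _ hpos.ne']
  have hfactor : ENNReal.ofReal (|l| ^ (1 + 2 * σ)) * ENNReal.ofReal |l|⁻¹ ≤ 1 := by
    rw [← ENNReal.ofReal_mul hpos.le, ENNReal.ofReal_le_one, Real.rpow_add (abs_pos.2 hl0),
      Real.rpow_one, mul_right_comm, mul_inv_cancel₀ (abs_ne_zero.2 hl0), one_mul]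
    exact Real.rpow_le_one (abs_nonneg _) hl (by linarith)
  simp only [hscale, neg_div]
  rw [lintegral_const_mul _ (by fun_prop : Measurable fun w => g (l * w))]
  calc _ ≤ ENNReal.ofReal (|l| ^ (1 + 2 * σ)) *
        (ENNReal.ofReal |l|⁻¹ * ∫⁻ w in Ioo (-(1 / 2)) (1 / 2), g w) := by
        gcongr; exact setLIntegral_Ioo_comp_mul_le hg hl0 hl
    _ ≤ 1 * ∫⁻ w in Ioo (-(1 / 2)) (1 / 2), g w := by rw [← mul_assoc]; gcongr
    _ = _ := one_mul _

lemma lintegral_segment_diff_le_gagliardoSq (hf : Continuous f) (hper : Function.Periodic f 1)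
    {σ : ℝ} (hσ : 0 ≤ σ) {s t : ℝ} (hst : |s - t| ≤ 1) :
    ∫⁻ u in Ioc (0 : ℝ) 1, ∫⁻ w in Ioo (-(1 : ℝ) / 2) (1 / 2),
      ENNReal.ofReal (‖f (u + s * w) - f (u + t * w)‖ ^ 2 / |w| ^ (1 + 2 * σ)) ≤
      gagliardoSq σ f := by
  have htranslate : ∀ w : ℝ, ∫⁻ u in Ioc (0 : ℝ) 1,
      ENNReal.ofReal (‖f (u + s * w) - f (u + t * w)‖ ^ 2 / |w| ^ (1 + 2 * σ)) =
      ∫⁻ u in Ioc (0 : ℝ) 1,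
        ENNReal.ofReal (‖f (u + (s - t) * w) - f (u + 0 * w)‖ ^ 2 / |w| ^ (1 + 2 * σ)) := by
    intro w
    rw [← lintegral_Ioc_comp_add_of_periodic (F := fun u =>
      ENNReal.ofReal (‖f (u + (s - t) * w) - f (u + 0 * w)‖ ^ 2 / |w| ^ (1 + 2 * σ)))
      (fun u => by simp only [add_right_comm u 1, hper (u + _)]) (t * w)]
    refine lintegral_congr fun u => ?_
    rw [show u + t * w + (s - t) * w = u + s * w by ring,
      show u + t * w + 0 * w = u + t * w by ring]
  rw [lintegral_lintegral_swap (measurable_sq_norm_sub_div (by fun_prop) (by fun_prop)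
    continuous_snd _).aemeasurable]
  simp only [htranslate]
  rw [lintegral_lintegral_swap (measurable_sq_norm_sub_div (by fun_prop) (by fun_prop)
    continuous_fst _).aemeasurable]
  simp only [zero_mul, add_zero]
  exact lintegral_mono fun u => lintegral_dilated_diff_le hf hσ hst u

/-- The domain `(0, 1] × (-1/2, 1/2)` of the energy integrals. -/
def energyDom : Set (ℝ × ℝ) := Ioc (0 : ℝ) 1 ×ˢ Ioo (-(1 : ℝ) / 2) (1 / 2)

lemma measurableSet_energyDom : MeasurableSet energyDom := measurableSet_Ioc.prod measurableSet_Ioo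

lemma lintegral_energyDom_segment_diff_le_gagliardoSq (hf : Continuous f)
    (hper : Function.Periodic f 1) {σ : ℝ} (hσ : 0 ≤ σ) {s t : ℝ} (hst : |s - t| ≤ 1) :
    ∫⁻ p in energyDom,
      ENNReal.ofReal (‖f (p.1 + s * p.2) - f (p.1 + t * p.2)‖ ^ 2 / |p.2| ^ (1 + 2 * σ)) ≤
      gagliardoSq σ f := by
  rw [energyDom, Measure.volume_eq_prod, ← Measure.prod_restrict, lintegral_prod]
  · exact lintegral_segment_diff_le_gagliardoSq hf hper hσ hst
  · exact (measurable_sq_norm_sub_div (by fun_prop) (by fun_prop) continuous_snd _).aemeasurable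

lemma integrableOn_meanSqOsc_div (hf : Continuous f) (hper : Function.Periodic f 1) {σ : ℝ}
    (hσ : 0 ≤ σ) (hfin : gagliardoSq σ f < ⊤) :
    IntegrableOn (fun p : ℝ × ℝ => meanSqOsc f p.1 p.2 / |p.2| ^ (1 + 2 * σ)) energyDom := by
  have hmeas : Measurable (fun p : ℝ × ℝ => meanSqOsc f p.1 p.2 / |p.2| ^ (1 + 2 * σ)) :=
    (continuous_meanSqOsc hf).measurable.div (continuous_snd.abs.measurable.pow_const _)
  have hofReal : ∀ p : ℝ × ℝ, ENNReal.ofReal (meanSqOsc f p.1 p.2 / |p.2| ^ (1 + 2 * σ)) =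
      ∫⁻ q in Icc (0 : ℝ) 1 ×ˢ Icc (0 : ℝ) 1, ENNReal.ofReal
        (‖f (p.1 + q.1 * p.2) - f (p.1 + q.2 * p.2)‖ ^ 2 / |p.2| ^ (1 + 2 * σ)) := fun p => by
    rw [meanSqOsc, ← integral_div, ofReal_integral_eq_lintegral_ofReal
      ((integrableOn_unitSquare (by fun_prop)).integrable.div_const _)
      (Eventually.of_forall fun q => by positivity)]
  have hvol : volume (Icc (0 : ℝ) 1 ×ˢ Icc (0 : ℝ) 1) = 1 := by
    rw [Measure.volume_eq_prod, Measure.prod_prod]; simp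
  refine ⟨hmeas.aestronglyMeasurable, ?_⟩
  rw [hasFiniteIntegral_iff_ofReal (Eventually.of_forall fun p =>
    div_nonneg (meanSqOsc_nonneg f _ _) (by positivity))]
  simp only [hofReal]
  rw [lintegral_lintegral_swap (measurable_sq_norm_sub_div (by fun_prop) (by fun_prop)
    (by fun_prop : Continuous fun x : (ℝ × ℝ) × ℝ × ℝ => x.1.2) _).aemeasurable]
  calc _ ≤ ∫⁻ _ in Icc (0 : ℝ) 1 ×ˢ Icc (0 : ℝ) 1, gagliardoSq σ f := by
        refine setLIntegral_mono measurable_const fun q hq => ?_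
        refine lintegral_energyDom_segment_diff_le_gagliardoSq hf hper hσ ?_
        obtain ⟨⟨h1, h2⟩, h3, h4⟩ := hq
        exact abs_le.2 ⟨by linarith, by linarith⟩
    _ = gagliardoSq σ f := by rw [setLIntegral_const, hvol, mul_one]
    _ < ⊤ := hfin

lemma gagliardoSq_prodMk_le {g : ℝ → E} (hf : Continuous f) (σ : ℝ) :
    gagliardoSq σ (fun x => (f x, g x)) ≤ gagliardoSq σ f + gagliardoSq σ g := by
  have hmeas : Measurable (fun p : ℝ × ℝ =>
      ENNReal.ofReal (‖f (p.1 + p.2) - f p.1‖ ^ 2 / |p.2| ^ (1 + 2 * σ))) :=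
    measurable_sq_norm_sub_div (by fun_prop) (by fun_prop) continuous_snd _
  have hinner : Measurable (fun u => ∫⁻ w in Ioo (-(1 : ℝ) / 2) (1 / 2),
      ENNReal.ofReal (‖f (u + w) - f u‖ ^ 2 / |w| ^ (1 + 2 * σ))) :=
    hmeas.lintegral_prod_right'
  rw [gagliardoSq, gagliardoSq, gagliardoSq, ← lintegral_add_left hinner]
  refine lintegral_mono fun u => ?_
  rw [← lintegral_add_left (measurable_sq_norm_sub_div (ω := fun w => w) (by fun_prop)
    continuous_const continuous_id _)]
  refine lintegral_mono fun w => ?_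
  rw [← ENNReal.ofReal_add (by positivity) (by positivity), ← add_div]
  refine ENNReal.ofReal_le_ofReal (div_le_div_of_nonneg_right ?_ (by positivity))
  rw [Prod.mk_sub_mk, Prod.norm_mk]
  rcases max_choice ‖f (u + w) - f u‖ ‖g (u + w) - g u‖ with h | h <;> rw [h]
  · exact le_add_of_nonneg_right (sq_nonneg _)
  · exact le_add_of_nonneg_left (sq_nonneg _)

end Gagliardo

section Path

variable {E : Type*} [NormedAddCommGroup E] {f : ℝ → E}

lemma exists_norm_le_of_periodic (hf : Continuous f) (hper : Function.Periodic f 1) :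
    ∃ K, ∀ x, ‖f x‖ ≤ K := by
  obtain ⟨K, hK⟩ := (hper.isBounded_of_continuous one_ne_zero hf).exists_norm_le
  exact ⟨K, fun x => hK _ (mem_range_self x)⟩

variable [NormedSpace ℝ E]

lemma periodic_deriv (hper : Function.Periodic f 1) : Function.Periodic (deriv f) 1 := fun x => by
  rw [← deriv_comp_add_const, funext hper]

lemma deriv_add_smul {γ h : ℝ → E} (hγ : ContDiff ℝ 1 γ) (hh : ContDiff ℝ 1 h) (τ : ℝ) :
    deriv (γ + τ • h) = fun x => deriv γ x + τ • deriv h x := by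
  funext x
  have hγx : DifferentiableAt ℝ γ x := hγ.differentiable one_ne_zero x
  have hhx : DifferentiableAt ℝ h x := hh.differentiable one_ne_zero x
  rw [deriv_add hγx (hhx.const_smul τ), deriv_const_smul τ hhx]

variable [CompleteSpace E]

lemma sub_eq_smul_segMean_deriv (hf : ContDiff ℝ 1 f) (u w : ℝ) :
    f (u + w) - f u = w • segMean (deriv f) u w := by
  rw [smul_segMean, intervalIntegral.integral_deriv_eq_sub
    (fun x _ => hf.differentiable one_ne_zero x)
    ((hf.continuous_deriv le_rfl).intervalIntegrable _ _)]

lemma norm_sub_le_integral_norm_deriv (hf : ContDiff ℝ 1 f) {x y : ℝ} (hxy : x ≤ y) :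
    ‖f y - f x‖ ≤ ∫ θ in x..y, ‖deriv f θ‖ := by
  rw [← intervalIntegral.integral_deriv_eq_sub (fun z _ => hf.differentiable one_ne_zero z)
    ((hf.continuous_deriv le_rfl).intervalIntegrable _ _)]
  exact intervalIntegral.norm_integral_le_integral_norm hxy

end Path

section Curve

variable {f : ℝ → Rn n}

lemma arcLen_eq (f : ℝ → Rn n) (u w : ℝ) :
    arcLen f u w = |w| * segMean (fun x => ‖deriv f x‖) u w := by
  rw [arcLen, ← smul_segMean, smul_eq_mul, abs_mul, abs_of_nonneg (segMean_norm_nonneg _ u w)]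

lemma curveLen_eq (f : ℝ → Rn n) : curveLen f = segMean (fun x => ‖deriv f x‖) 0 1 := by
  have := smul_segMean (fun x => ‖deriv f x‖) 0 1
  rw [one_smul, zero_add] at this
  exact this.symm

lemma continuous_arcLen (hf : ContDiff ℝ 1 f) :
    Continuous (fun p : ℝ × ℝ => arcLen f p.1 p.2) := by
  simp only [arcLen_eq]
  exact continuous_snd.abs.mul (continuous_segMean (hf.continuous_deriv le_rfl).norm)

lemma measurable_ohIntegrand (hf : ContDiff ℝ 1 f) (α : ℝ) :
    Measurable (fun p : ℝ × ℝ => ohIntegrand α f p.1 p.2) := by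
  have hf' : Continuous (deriv f) := hf.continuous_deriv le_rfl
  have hidist : Continuous (fun p : ℝ × ℝ => idist f p.1 p.2) :=
    (continuous_arcLen hf).min (continuous_const.sub (continuous_arcLen hf))
  have hchord : Continuous (fun p : ℝ × ℝ => ‖f (p.1 + p.2) - f p.1‖) := by
    have := hf.continuous
    fun_prop
  have hspeed : Continuous (fun p : ℝ × ℝ => ‖deriv f (p.1 + p.2)‖) :=
    (hf'.comp (continuous_fst.add continuous_snd)).norm
  have hspeed₀ : Continuous (fun p : ℝ × ℝ => ‖deriv f p.1‖) := (hf'.comp continuous_fst).norm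
  exact ((((hchord.measurable.pow_const α).const_div 1).sub
    ((hidist.measurable.pow_const α).const_div 1)).mul hspeed.measurable).mul hspeed₀.measurable

lemma norm_sub_le_curveLen_sub (hf : ContDiff ℝ 1 f) (hper : Function.Periodic f 1) {x y : ℝ}
    (hyx : y ≤ x + 1) : ‖f y - f x‖ ≤ curveLen f - ∫ θ in x..y, ‖deriv f θ‖ := by
  have hint : ∀ a b : ℝ, IntervalIntegrable (fun θ => ‖deriv f θ‖) volume a b :=
    (hf.continuous_deriv le_rfl).norm.intervalIntegrable
  have hshift : curveLen f = ∫ θ in x..(x + 1), ‖deriv f θ‖ := by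
    have hspeed : Function.Periodic (fun θ => ‖deriv f θ‖) 1 := (periodic_deriv hper).comp _
    simpa only [zero_add, curveLen] using hspeed.intervalIntegral_add_eq 0 x
  rw [hshift, intervalIntegral.integral_interval_sub_left (hint _ _) (hint _ _), norm_sub_rev,
    ← hper x]
  exact norm_sub_le_integral_norm_deriv hf hyx

lemma norm_sub_le_idist (hf : ContDiff ℝ 1 f) (hper : Function.Periodic f 1) {u w : ℝ}
    (hw : |w| ≤ 1) : ‖f (u + w) - f u‖ ≤ idist f u w := by
  obtain ⟨hw₁, hw₂⟩ := abs_le.1 hw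
  rw [idist, arcLen]
  rcases le_total 0 w with h0 | h0
  · have huw : u ≤ u + w := by linarith
    rw [abs_of_nonneg (intervalIntegral.integral_nonneg huw fun _ _ => norm_nonneg _)]
    exact le_min (norm_sub_le_integral_norm_deriv hf huw)
      (norm_sub_le_curveLen_sub hf hper (by linarith))
  · have hwu : u + w ≤ u := by linarith
    rw [intervalIntegral.integral_symm, abs_neg,
      abs_of_nonneg (intervalIntegral.integral_nonneg hwu fun _ _ => norm_nonneg _), norm_sub_rev]
    exact le_min (norm_sub_le_integral_norm_deriv hf hwu)
      (norm_sub_le_curveLen_sub hf hper (by linarith))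

lemma ohIntegrand_eq_rpow_neg (hf : ContDiff ℝ 1 f) (hper : Function.Periodic f 1) (α : ℝ)
    {u w : ℝ} (hw : |w| ≤ 1) :
    ohIntegrand α f u w = (‖f (u + w) - f u‖ ^ (-α) - idist f u w ^ (-α)) *
      (‖deriv f (u + w)‖ * ‖deriv f u‖) := by
  rw [ohIntegrand, Real.rpow_neg (norm_nonneg _), Real.rpow_neg
    ((norm_nonneg _).trans (norm_sub_le_idist hf hper hw)), one_div, one_div, mul_assoc]

lemma ohIntegrand_nonneg (hf : ContDiff ℝ 1 f) (hper : Function.Periodic f 1) {α u w : ℝ}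
    (hα : 0 ≤ α) (hw : |w| ≤ 1) (hne : f (u + w) ≠ f u) : 0 ≤ ohIntegrand α f u w := by
  have hpow : idist f u w ^ (-α) ≤ ‖f (u + w) - f u‖ ^ (-α) :=
    Real.rpow_le_rpow_of_nonpos (norm_pos_iff.2 (sub_ne_zero.2 hne))
      (norm_sub_le_idist hf hper hw) (neg_nonpos.2 hα)
  rw [ohIntegrand_eq_rpow_neg hf hper α hw]
  exact mul_nonneg (sub_nonneg.2 hpow) (by positivity)

lemma ohIntegrand_eq_segMean (hf : ContDiff ℝ 1 f) (α : ℝ) {u w : ℝ}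
    (hlen : 2 * arcLen f u w ≤ curveLen f) :
    ohIntegrand α f u w = (|w| ^ α)⁻¹ * (((‖segMean (deriv f) u w‖ ^ 2) ^ (-(α / 2)) -
      (segMean (fun x => ‖deriv f x‖) u w ^ 2) ^ (-(α / 2))) *
        (‖deriv f (u + w)‖ * ‖deriv f u‖)) := by
  have hpow : ∀ x : ℝ, 0 ≤ x → 1 / (|w| * x) ^ α = (|w| ^ α)⁻¹ * (x ^ 2) ^ (-(α / 2)) := by
    intro x hx
    rw [Real.mul_rpow (abs_nonneg _) hx, ← Real.rpow_natCast x 2, ← Real.rpow_mul hx,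
      show ((2 : ℕ) : ℝ) * -(α / 2) = -α by push_cast; ring, Real.rpow_neg hx, one_div, mul_inv]
  rw [ohIntegrand, idist, min_eq_left (by linarith), sub_eq_smul_segMean_deriv hf, arcLen_eq,
    norm_smul, Real.norm_eq_abs, hpow _ (norm_nonneg _), hpow _ (segMean_norm_nonneg _ _ _)]
  ring

lemma segMean_deriv_ne_zero (hf : ContDiff ℝ 1 f) (hinj : PerInjective f) (hreg : RegularCurve f)
    {u w : ℝ} (hw : |w| < 1) : segMean (deriv f) u w ≠ 0 := by
  intro hzero
  have hclosed : f (u + w) = f u := by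
    rw [← sub_eq_zero, sub_eq_smul_segMean_deriv hf, hzero, smul_zero]
  obtain ⟨k, hk⟩ := hinj _ _ hclosed
  have hwk : w = -(k : ℝ) := by linarith
  have hk0 : k = 0 := by
    rw [hwk, abs_neg, ← Int.cast_abs] at hw
    exact Int.abs_lt_one_iff.1 (by exact_mod_cast hw)
  rw [hwk, hk0, Int.cast_zero, neg_zero, segMean_zero] at hzero
  exact hreg u hzero

lemma exists_le_norm_segMean_deriv (hf : ContDiff ℝ 1 f) (hper : Function.Periodic f 1)
    (hinj : PerInjective f) (hreg : RegularCurve f) :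
    ∃ c, 0 < c ∧ ∀ u w, |w| ≤ 1 / 2 → c ≤ ‖segMean (deriv f) u w‖ := by
  obtain ⟨p, hp, hmin⟩ := ((isCompact_Icc (a := (0 : ℝ)) (b := 1)).prod
    (isCompact_Icc (a := (-(1 / 2) : ℝ)) (b := 1 / 2))).exists_isMinOn ⟨(0, 0), by norm_num⟩
    (continuous_segMean (hf.continuous_deriv le_rfl)).norm.continuousOn
  refine ⟨‖segMean (deriv f) p.1 p.2‖, norm_pos_iff.2 (segMean_deriv_ne_zero hf hinj hreg ?_),
    fun u w hw => ?_⟩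
  · exact (abs_le.2 hp.2).trans_lt (by norm_num)
  · have hperMean : Function.Periodic (fun u => segMean (deriv f) u w) 1 := fun u => by
      simp only [segMean, add_right_comm u 1, periodic_deriv hper (u + _)]
    obtain ⟨v, hv, huv⟩ := hperMean.exists_mem_Ico₀ one_pos u
    rw [huv]
    exact hmin (a := (v, w)) ⟨Ico_subset_Icc_self hv, abs_le.1 hw⟩

end Curve

section Variation

variable {γ h : ℝ → Rn n}

/-- Bounds that hold uniformly along the variation `γ + τ h`, `|τ| ≤ r`, of a closed `C¹` curve: the
velocities are at most `K`, and the chords over parameter intervals of length `|w| ≤ 1/2` are at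
least `c|w|`. -/
structure VariationBounds (γ h : ℝ → Rn n) (c K r : ℝ) : Prop where
  contDiff : ContDiff ℝ 1 γ
  contDiff_dir : ContDiff ℝ 1 h
  periodic : Function.Periodic γ 1
  periodic_dir : Function.Periodic h 1
  c_pos : 0 < c
  r_pos : 0 < r
  r_le_one : r ≤ 1
  norm_deriv_le : ∀ x, ‖deriv γ x‖ ≤ K
  norm_deriv_dir_le : ∀ x, ‖deriv h x‖ ≤ K
  le_norm_segMean : ∀ τ, |τ| ≤ r → ∀ u w, |w| ≤ 1 / 2 → c ≤ ‖segMean (deriv (γ + τ • h)) u w‖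

namespace VariationBounds

lemma exists_of_perInjective_of_regularCurve (hγ : ContDiff ℝ 1 γ) (hh : ContDiff ℝ 1 h)
    (hγper : Function.Periodic γ 1) (hhper : Function.Periodic h 1) (hinj : PerInjective γ)
    (hreg : RegularCurve γ) : ∃ c K r, VariationBounds γ h c K r := by
  obtain ⟨c, hc, hcV⟩ := exists_le_norm_segMean_deriv hγ hγper hinj hreg
  obtain ⟨K₁, hK₁⟩ := exists_norm_le_of_periodic (hγ.continuous_deriv le_rfl) (periodic_deriv hγper)
  obtain ⟨K₂, hK₂⟩ := exists_norm_le_of_periodic (hh.continuous_deriv le_rfl) (periodic_deriv hhper)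
  set K := max 1 (max K₁ K₂)
  have hK : 0 < K := zero_lt_one.trans_le (le_max_left _ _)
  have hγK : ∀ x, ‖deriv γ x‖ ≤ K := fun x =>
    (hK₁ x).trans ((le_max_left _ _).trans (le_max_right _ _))
  have hhK : ∀ x, ‖deriv h x‖ ≤ K := fun x =>
    (hK₂ x).trans ((le_max_right _ _).trans (le_max_right _ _))
  refine ⟨c / 2, K, min 1 (c / (2 * K)), hγ, hh, hγper, hhper, half_pos hc,
    lt_min one_pos (by positivity), min_le_left _ _, hγK, hhK, fun τ hτ u w hw => ?_⟩
  have hvel : LipBound (min 1 (c / (2 * K))) K (fun τ => segMean (deriv (γ + τ • h)) u w) := by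
    simp only [deriv_add_smul hγ hh]
    exact .segMean (fun τ => (hγ.continuous_deriv le_rfl).add
      ((hh.continuous_deriv le_rfl).const_smul τ)) (fun x => .affine (hγK x) (hhK x)) u w
  have hdiff : ‖segMean (deriv (γ + τ • h)) u w - segMean (deriv γ) u w‖ ≤ c / 2 :=
    calc _ ≤ K * |τ| := by simpa only [zero_smul, add_zero] using hvel.norm_sub_le τ hτ
      _ ≤ K * (c / (2 * K)) := by gcongr; exact hτ.trans (min_le_right _ _)
      _ = c / 2 := by field_simp
  linarith [norm_sub_norm_le (segMean (deriv γ) u w) (segMean (deriv (γ + τ • h)) u w),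
    norm_sub_rev (segMean (deriv γ) u w) (segMean (deriv (γ + τ • h)) u w), hcV u w hw]

variable {c K r : ℝ}

lemma contDiff_add_smul (B : VariationBounds γ h c K r) (τ : ℝ) : ContDiff ℝ 1 (γ + τ • h) :=
  B.contDiff.add (contDiff_const.smul B.contDiff_dir)

lemma periodic_add_smul (B : VariationBounds γ h c K r) (τ : ℝ) :
    Function.Periodic (γ + τ • h) 1 :=
  B.periodic.add (B.periodic_dir.smul τ)

lemma continuous_deriv (B : VariationBounds γ h c K r) : Continuous (deriv γ) :=
  B.contDiff.continuous_deriv le_rfl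

lemma continuous_deriv_dir (B : VariationBounds γ h c K r) : Continuous (deriv h) :=
  B.contDiff_dir.continuous_deriv le_rfl

lemma le_speed (B : VariationBounds γ h c K r) {τ : ℝ} (hτ : |τ| ≤ r) (u : ℝ) :
    c ≤ ‖deriv (γ + τ • h) u‖ := by
  simpa only [segMean_zero] using B.le_norm_segMean τ hτ u 0 (by norm_num)

lemma abs_zero_le (B : VariationBounds γ h c K r) : |(0 : ℝ)| ≤ r := by
  simpa only [abs_zero] using B.r_pos.le

lemma K_pos (B : VariationBounds γ h c K r) : 0 < K := by
  have hspeed := B.le_speed B.abs_zero_le 0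
  rw [zero_smul, add_zero] at hspeed
  exact B.c_pos.trans_le (hspeed.trans (B.norm_deriv_le 0))

lemma lipBound_deriv (B : VariationBounds γ h c K r) (u : ℝ) :
    LipBound r K (fun τ => deriv (γ + τ • h) u) := by
  simp only [deriv_add_smul B.contDiff B.contDiff_dir]
  exact .affine (B.norm_deriv_le u) (B.norm_deriv_dir_le u)

lemma lipBound_meanVelocity (B : VariationBounds γ h c K r) (u w : ℝ) :
    LipBound r K (fun τ => segMean (deriv (γ + τ • h)) u w) :=
  .segMean (fun τ => (B.contDiff_add_smul τ).continuous_deriv le_rfl) B.lipBound_deriv u w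

lemma lipBound_meanSpeed (B : VariationBounds γ h c K r) (u w : ℝ) :
    LipBound r K (fun τ => segMean (fun x => ‖deriv (γ + τ • h) x‖) u w) :=
  .segMean (fun τ => ((B.contDiff_add_smul τ).continuous_deriv le_rfl).norm)
    (fun x => (B.lipBound_deriv x).norm) u w

lemma lipBound_speed_mul_speed (B : VariationBounds γ h c K r) (u v : ℝ) :
    LipBound r (3 * K * K) (fun τ => ‖deriv (γ + τ • h) u‖ * ‖deriv (γ + τ • h) v‖) :=
  (B.lipBound_deriv u).norm.mul B.r_le_one (B.lipBound_deriv v).norm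

lemma lipBound_arcLen (B : VariationBounds γ h c K r) (u : ℝ) {w : ℝ} (hw : |w| ≤ 1) :
    LipBound r K (fun τ => arcLen (γ + τ • h) u w) := by
  simp only [arcLen_eq]
  refine ((B.lipBound_meanSpeed u w).const_smul |w|).mono ?_
  rw [abs_abs]
  exact mul_le_of_le_one_left B.K_pos.le hw

lemma lipBound_curveLen (B : VariationBounds γ h c K r) :
    LipBound r K (fun τ => curveLen (γ + τ • h)) := by
  simpa only [curveLen_eq] using B.lipBound_meanSpeed 0 1

lemma lipBound_idist (B : VariationBounds γ h c K r) (u : ℝ) {w : ℝ} (hw : |w| ≤ 1) :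
    LipBound r (K + K) (fun τ => idist (γ + τ • h) u w) :=
  ((B.lipBound_arcLen u hw).mono (le_add_of_nonneg_left B.K_pos.le)).min
    (B.lipBound_curveLen.sub (B.lipBound_arcLen u hw))

lemma lipBound_chord (B : VariationBounds γ h c K r) (u : ℝ) {w : ℝ} (hw : |w| ≤ 1) :
    LipBound r K (fun τ => ‖(γ + τ • h) (u + w) - (γ + τ • h) u‖) := by
  simp only [sub_eq_smul_segMean_deriv (B.contDiff_add_smul _)]
  exact (((B.lipBound_meanVelocity u w).const_smul w).mono
    (mul_le_of_le_one_left B.K_pos.le hw)).norm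

lemma le_chord (B : VariationBounds γ h c K r) {τ : ℝ} (hτ : |τ| ≤ r) (u : ℝ) {w : ℝ}
    (hw : |w| ≤ 1 / 2) : |w| * c ≤ ‖(γ + τ • h) (u + w) - (γ + τ • h) u‖ := by
  rw [sub_eq_smul_segMean_deriv (B.contDiff_add_smul τ), norm_smul, Real.norm_eq_abs]
  gcongr
  exact B.le_norm_segMean τ hτ u w hw

lemma chord_le_idist (B : VariationBounds γ h c K r) (τ u : ℝ) {w : ℝ} (hw : |w| ≤ 1) :
    ‖(γ + τ • h) (u + w) - (γ + τ • h) u‖ ≤ idist (γ + τ • h) u w :=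
  norm_sub_le_idist (B.contDiff_add_smul τ) (B.periodic_add_smul τ) hw

lemma two_mul_arcLen_le_curveLen (B : VariationBounds γ h c K r) {τ : ℝ} (hτ : |τ| ≤ r) (u : ℝ)
    {w : ℝ} (hw : 4 * K * |w| ≤ c) : 2 * arcLen (γ + τ • h) u w ≤ curveLen (γ + τ • h) := by
  have hmean : segMean (fun x => ‖deriv (γ + τ • h) x‖) u w ≤ 2 * K :=
    (le_abs_self _).trans ((B.lipBound_meanSpeed u w).norm_le B.r_le_one hτ)
  rw [arcLen_eq, curveLen_eq]
  calc 2 * (|w| * segMean (fun x => ‖deriv (γ + τ • h) x‖) u w) ≤ 2 * (|w| * (2 * K)) := by gcongr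
    _ = 4 * K * |w| := by ring
    _ ≤ c := hw
    _ ≤ segMean (fun x => ‖deriv (γ + τ • h) x‖) 0 1 :=
        le_segMean ((B.contDiff_add_smul τ).continuous_deriv le_rfl).norm (B.le_speed hτ) 0 1

lemma exists_lipBound_sq_meanSpeed_sub_sq_norm_meanVelocity (B : VariationBounds γ h c K r) :
    ∃ C, ∀ u w, LipBound r (C * meanSqOsc (fun x => (deriv γ x, deriv h x)) u w) (fun τ =>
      segMean (fun x => ‖deriv (γ + τ • h) x‖) u w ^ 2 -
        ‖segMean (deriv (γ + τ • h)) u w‖ ^ 2) := by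
  obtain ⟨C, hC⟩ := exists_lipBound_sq_segMean_norm_sub_sq_norm_segMean (E := Rn n) B.c_pos K
  have hspeed : ∀ τ, |τ| ≤ r → ∀ x, c ≤ ‖deriv γ x + τ • deriv h x‖ := fun τ hτ x => by
    simpa only [deriv_add_smul B.contDiff B.contDiff_dir] using B.le_speed hτ x
  simp only [deriv_add_smul B.contDiff B.contDiff_dir]
  exact ⟨C, hC B.r_pos.le B.r_le_one B.continuous_deriv B.continuous_deriv_dir B.norm_deriv_le
    B.norm_deriv_dir_le hspeed⟩

lemma exists_lipBound_ohIntegrand_near (B : VariationBounds γ h c K r) {α : ℝ} (hα : 0 ≤ α) :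
    ∃ C, ∀ u w, |w| ≤ 1 / 2 → 4 * K * |w| ≤ c →
      LipBound r (C * (meanSqOsc (fun x => (deriv γ x, deriv h x)) u w / |w| ^ α))
        (fun τ => ohIntegrand α (γ + τ • h) u w) := by
  obtain ⟨D, hdefect⟩ := B.exists_lipBound_sq_meanSpeed_sub_sq_norm_meanVelocity
  set β := α / 2
  set L := β * ((c ^ 2) ^ (-(β + 1)) + (β + 1) * (c ^ 2) ^ (-(β + 1) - 1) * (3 * K * K))
  refine ⟨3 * (3 * D * L) * (3 * K * K), fun u w hw hwc => ?_⟩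
  have hvel : LipBound r (3 * K * K) (fun τ => ‖segMean (deriv (γ + τ • h)) u w‖ ^ 2) := by
    have := (B.lipBound_meanVelocity u w).norm
    simpa only [← sq] using this.mul B.r_le_one this
  have hspeed : LipBound r (3 * K * K)
      (fun τ => segMean (fun x => ‖deriv (γ + τ • h) x‖) u w ^ 2) := by
    have := B.lipBound_meanSpeed u w
    simpa only [← sq] using this.mul B.r_le_one this
  have hc_vel : ∀ τ, |τ| ≤ r → c ^ 2 ≤ ‖segMean (deriv (γ + τ • h)) u w‖ ^ 2 := fun τ hτ =>
    pow_le_pow_left₀ B.c_pos.le (B.le_norm_segMean τ hτ u w hw) 2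
  have hc_speed : ∀ τ, |τ| ≤ r → c ^ 2 ≤ segMean (fun x => ‖deriv (γ + τ • h) x‖) u w ^ 2 :=
    fun τ hτ => (hc_vel τ hτ).trans (pow_le_pow_left₀ (norm_nonneg _) (norm_segMean_le _ u w) 2)
  have hpow := LipBound.rpow_neg_sub_rpow_neg (sq_pos_of_pos B.c_pos) (by positivity : 0 ≤ β)
    B.r_pos.le B.r_le_one hvel hspeed (hdefect u w) hc_vel hc_speed
  have hprod := (hpow.mul B.r_le_one (B.lipBound_speed_mul_speed (u + w) u)).const_smul (|w| ^ α)⁻¹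
  refine (hprod.congr B.r_pos.le fun τ hτ => ?_).mono (le_of_eq ?_)
  · exact ohIntegrand_eq_segMean (B.contDiff_add_smul τ) α (B.two_mul_arcLen_le_curveLen hτ u hwc)
  · rw [abs_of_nonneg (by positivity)]
    ring

lemma exists_lipBound_ohIntegrand_far (B : VariationBounds γ h c K r) {α : ℝ} (hα : 0 ≤ α) :
    ∃ C, ∀ u w, |w| ≤ 1 / 2 → c ≤ 4 * K * |w| →
      LipBound r C (fun τ => ohIntegrand α (γ + τ • h) u w) := by
  have hc := B.c_pos
  have hK := B.K_pos
  set m := c / (4 * K) * c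
  have hm : 0 < m := by positivity
  refine ⟨3 * (m ^ (-α) + α * m ^ (-α - 1) * K + (m ^ (-α) + α * m ^ (-α - 1) * (K + K))) *
    (3 * K * K), fun u w hw hwc => ?_⟩
  have hw1 : |w| ≤ 1 := hw.trans (by norm_num)
  have hm_chord : ∀ τ, |τ| ≤ r → m ≤ ‖(γ + τ • h) (u + w) - (γ + τ • h) u‖ := fun τ hτ => by
    have hw_lower : c / (4 * K) ≤ |w| := (div_le_iff₀' (by positivity)).2 hwc
    exact (mul_le_mul_of_nonneg_right hw_lower hc.le).trans (B.le_chord hτ u hw)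
  have hchord := (B.lipBound_chord u hw1).rpow_neg hm hα B.r_pos.le hm_chord
  have hidist := (B.lipBound_idist u hw1).rpow_neg hm hα B.r_pos.le
    fun τ hτ => (hm_chord τ hτ).trans (B.chord_le_idist τ u hw1)
  exact ((hchord.sub hidist).mul B.r_le_one (B.lipBound_speed_mul_speed (u + w) u)).congr
    B.r_pos.le fun τ _ =>
      ohIntegrand_eq_rpow_neg (B.contDiff_add_smul τ) (B.periodic_add_smul τ) α hw1

lemma exists_lipBound_ohIntegrand (B : VariationBounds γ h c K r) {α : ℝ} (hα : 0 ≤ α) :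
    ∃ C, ∀ u w, |w| ≤ 1 / 2 →
      LipBound r (C * (meanSqOsc (fun x => (deriv γ x, deriv h x)) u w / |w| ^ α + 1))
        (fun τ => ohIntegrand α (γ + τ • h) u w) := by
  obtain ⟨C₁, hnear⟩ := B.exists_lipBound_ohIntegrand_near hα
  obtain ⟨C₂, hfar⟩ := B.exists_lipBound_ohIntegrand_far hα
  refine ⟨|C₁| + |C₂|, fun u w hw => ?_⟩
  set Q := meanSqOsc (fun x => (deriv γ x, deriv h x)) u w / |w| ^ α
  have hQ : 0 ≤ Q := div_nonneg (meanSqOsc_nonneg _ _ _) (by positivity)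
  have hC₁Q : 0 ≤ |C₁| * Q := by positivity
  have hC₂Q : 0 ≤ |C₂| * Q := by positivity
  rcases le_total (4 * K * |w|) c with hwc | hwc
  · refine (hnear u w hw hwc).mono ?_
    linarith [mul_le_mul_of_nonneg_right (le_abs_self C₁) hQ, abs_nonneg C₁, abs_nonneg C₂]
  · refine (hfar u w hw hwc).mono ?_
    linarith [le_abs_self C₂, abs_nonneg C₁]

end VariationBounds

end Variation

section Differentiability

lemma ae_snd_ne_zero : ∀ᵐ p : ℝ × ℝ, p.2 ≠ 0 :=
  Measure.quasiMeasurePreserving_snd.ae (Measure.ae_ne volume 0)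

lemma strictMono_integral_norm_deriv {f : ℝ → Rn n} (hf : ContDiff ℝ 1 f) (hreg : RegularCurve f)
    (u : ℝ) : StrictMono (fun w => ∫ θ in u..(u + w), ‖deriv f θ‖) := by
  have hint : ∀ a b : ℝ, IntervalIntegrable (fun θ => ‖deriv f θ‖) volume a b :=
    (hf.continuous_deriv le_rfl).norm.intervalIntegrable
  intro a b hab
  rw [← sub_pos, intervalIntegral.integral_interval_sub_left (hint _ _) (hint _ _)]
  exact intervalIntegral.intervalIntegral_pos_of_pos (hint _ _)
    (fun θ => norm_pos_iff.2 (hreg θ)) (by linarith)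

lemma ae_arcLen_ne {f : ℝ → Rn n} (hf : ContDiff ℝ 1 f) (hreg : RegularCurve f) (ℓ : ℝ) :
    ∀ᵐ p : ℝ × ℝ, arcLen f p.1 p.2 ≠ ℓ := by
  have hmeas : MeasurableSet {p : ℝ × ℝ | arcLen f p.1 p.2 ≠ ℓ} :=
    (isClosed_eq (continuous_arcLen hf) continuous_const).measurableSet.compl
  rw [Measure.volume_eq_prod]
  refine (Measure.ae_prod_iff_ae_ae hmeas).2 (Eventually.of_forall fun u => ?_)
  have hfiber : ∀ y, ((fun w => ∫ θ in u..(u + w), ‖deriv f θ‖) ⁻¹' {y}).Countable := fun y =>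
    (subsingleton_singleton.preimage
      (strictMono_integral_norm_deriv hf hreg u).injective).countable
  refine (((hfiber ℓ).union (hfiber (-ℓ))).mono fun w hw => ?_).ae_notMem volume
  exact eq_or_eq_neg_of_abs_eq hw

namespace VariationBounds

variable {γ h : ℝ → Rn n} {c K r : ℝ}

lemma regularCurve (B : VariationBounds γ h c K r) : RegularCurve γ := fun u => by
  have hspeed := B.le_speed B.abs_zero_le u
  rw [zero_smul, add_zero] at hspeed
  exact norm_pos_iff.1 (B.c_pos.trans_le hspeed)

lemma differentiableAt_speed (B : VariationBounds γ h c K r) (u : ℝ) :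
    DifferentiableAt ℝ (fun τ : ℝ => ‖deriv (γ + τ • h) u‖) 0 := by
  simp only [deriv_add_smul B.contDiff B.contDiff_dir]
  refine (by fun_prop : DifferentiableAt ℝ (fun τ : ℝ => deriv γ u + τ • deriv h u) 0).norm ℝ ?_
  simpa only [zero_smul, add_zero] using B.regularCurve u

lemma differentiableAt_meanSpeed (B : VariationBounds γ h c K r) (u w : ℝ) :
    DifferentiableAt ℝ (fun τ : ℝ => segMean (fun x => ‖deriv (γ + τ • h) x‖) u w) 0 := by
  have hcont : ∀ τ : ℝ, Continuous fun s : ℝ => ‖deriv (γ + τ • h) (u + s * w)‖ := fun τ =>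
    ((B.contDiff_add_smul τ).continuous_deriv le_rfl).norm.comp (by fun_prop)
  exact (integrable_deriv_and_hasDerivAt_integral_of_lipBound B.r_pos
    (fun τ => (hcont τ).aestronglyMeasurable) (integrable_const K)
    (Eventually.of_forall fun s => (B.lipBound_deriv _).norm)
    (Eventually.of_forall fun s => B.differentiableAt_speed _)).2.differentiableAt

lemma differentiableAt_arcLen (B : VariationBounds γ h c K r) (u w : ℝ) :
    DifferentiableAt ℝ (fun τ : ℝ => arcLen (γ + τ • h) u w) 0 := by
  simpa only [arcLen_eq] using (B.differentiableAt_meanSpeed u w).const_mul |w|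

lemma differentiableAt_curveLen (B : VariationBounds γ h c K r) :
    DifferentiableAt ℝ (fun τ : ℝ => curveLen (γ + τ • h)) 0 := by
  simpa only [curveLen_eq] using B.differentiableAt_meanSpeed 0 1

lemma differentiableAt_idist (B : VariationBounds γ h c K r) {u w : ℝ}
    (htie : arcLen γ u w ≠ curveLen γ / 2) :
    DifferentiableAt ℝ (fun τ : ℝ => idist (γ + τ • h) u w) 0 := by
  have harc := B.differentiableAt_arcLen u w
  have hcompl := B.differentiableAt_curveLen.sub harc
  rcases lt_or_gt_of_ne htie with hlt | hgt
  · refine harc.congr_of_eventuallyEq ?_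
    have hev := harc.continuousAt.eventually_lt hcompl.continuousAt
      (by simp only [Pi.sub_apply, zero_smul, add_zero]; linarith)
    exact hev.mono fun τ hτ => min_eq_left hτ.le
  · refine hcompl.congr_of_eventuallyEq ?_
    have hev := hcompl.continuousAt.eventually_lt harc.continuousAt
      (by simp only [Pi.sub_apply, zero_smul, add_zero]; linarith)
    exact hev.mono fun τ hτ => min_eq_right hτ.le

lemma add_smul_ne (B : VariationBounds γ h c K r) {τ : ℝ} (hτ : |τ| ≤ r) {u w : ℝ}
    (hw : |w| ≤ 1 / 2) (hw0 : w ≠ 0) : (γ + τ • h) (u + w) ≠ (γ + τ • h) u :=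
  sub_ne_zero.1 <| norm_pos_iff.1 <|
    (mul_pos (abs_pos.2 hw0) B.c_pos).trans_le (B.le_chord hτ u hw)

lemma differentiableAt_chord (B : VariationBounds γ h c K r) {u w : ℝ} (hw : |w| ≤ 1 / 2)
    (hw0 : w ≠ 0) :
    DifferentiableAt ℝ (fun τ : ℝ => ‖(γ + τ • h) (u + w) - (γ + τ • h) u‖) 0 := by
  refine DifferentiableAt.norm ℝ ?_ (sub_ne_zero.2 (B.add_smul_ne B.abs_zero_le hw hw0))
  simp only [Pi.add_apply, Pi.smul_apply]
  fun_prop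

lemma differentiableAt_ohIntegrand (B : VariationBounds γ h c K r) (α : ℝ) {u w : ℝ}
    (hw : |w| ≤ 1 / 2) (hw0 : w ≠ 0) (htie : arcLen γ u w ≠ curveLen γ / 2) :
    DifferentiableAt ℝ (fun τ : ℝ => ohIntegrand α (γ + τ • h) u w) 0 := by
  have hchord_pos : 0 < ‖(γ + (0 : ℝ) • h) (u + w) - (γ + (0 : ℝ) • h) u‖ :=
    norm_pos_iff.2 (sub_ne_zero.2 (B.add_smul_ne B.abs_zero_le hw hw0))
  have hidist_pos : 0 < idist (γ + (0 : ℝ) • h) u w :=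
    hchord_pos.trans_le (B.chord_le_idist 0 u (hw.trans (by norm_num)))
  have hinv : ∀ g : ℝ → ℝ, DifferentiableAt ℝ g 0 → 0 < g 0 →
      DifferentiableAt ℝ (fun τ => 1 / g τ ^ α) 0 := fun g hg hg0 =>
    (differentiableAt_const _).div (hg.rpow_const (Or.inl hg0.ne'))
      (Real.rpow_pos_of_pos hg0 α).ne'
  exact (((hinv _ (B.differentiableAt_chord hw hw0) hchord_pos).sub
    (hinv _ (B.differentiableAt_idist htie) hidist_pos)).mul
      (B.differentiableAt_speed (u + w))).mul (B.differentiableAt_speed u)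

end VariationBounds

end Differentiability

section Energy

/-- The part of `energyDom` over which the truncated energy `oharaEeps α ε` integrates, up to a null
set: the end points `w = ±1/2` of `Wset ε` are left out. -/
def truncDom (ε : ℝ) : Set (ℝ × ℝ) := Ioc (0 : ℝ) 1 ×ˢ (Wset ε ∩ Ioo (-(1 : ℝ) / 2) (1 / 2))

lemma measurableSet_truncDom (ε : ℝ) : MeasurableSet (truncDom ε) :=
  measurableSet_Ioc.prod ((measurableSet_Icc.union measurableSet_Icc).inter measurableSet_Ioo)

lemma truncDom_subset_energyDom (ε : ℝ) : truncDom ε ⊆ energyDom :=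
  prod_mono_right inter_subset_right

lemma abs_snd_le_of_mem_energyDom {p : ℝ × ℝ} (hp : p ∈ energyDom) : |p.2| ≤ 1 / 2 :=
  abs_le.2 ⟨by linarith [hp.2.1], hp.2.2.le⟩

lemma volume_energyDom_ne_top : volume energyDom ≠ ⊤ := by
  rw [energyDom, Measure.volume_eq_prod, Measure.prod_prod]
  simp

lemma Wset_inter_Ioo_ae_eq {ε : ℝ} (hε : 0 < ε) :
    (Wset ε ∩ Ioo (-(1 : ℝ) / 2) (1 / 2) : Set ℝ) =ᵐ[volume] Wset ε := by
  have hsub : Wset ε ⊆ Icc (-(1 : ℝ) / 2) (1 / 2) :=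
    union_subset (fun w hw => ⟨hw.1, by linarith [hw.1, hw.2]⟩)
      (fun w hw => ⟨by linarith [hw.1, hw.2], hw.2⟩)
  have hae : (Wset ε ∩ Ioo (-(1 : ℝ) / 2) (1 / 2) : Set ℝ) =ᵐ[volume]
      (Wset ε ∩ Icc (-(1 : ℝ) / 2) (1 / 2) : Set ℝ) := (ae_eq_refl _).inter Ioo_ae_eq_Icc
  rwa [inter_eq_left.2 hsub] at hae

lemma oharaEeps_eq {α ε : ℝ} (hε : 0 < ε) {f : ℝ → Rn n}
    (hint : IntegrableOn (fun p : ℝ × ℝ => ohIntegrand α f p.1 p.2) energyDom) :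
    oharaEeps α ε f = ∫ p in truncDom ε, ohIntegrand α f p.1 p.2 := by
  have hint' := hint.mono_set (truncDom_subset_energyDom ε)
  rw [truncDom, Measure.volume_eq_prod] at hint' ⊢
  rw [setIntegral_prod _ hint', oharaEeps]
  simp only [setIntegral_congr_set (Wset_inter_Ioo_ae_eq hε)]

lemma oharaER_eq {α : ℝ} {f : ℝ → Rn n} (hf : ContDiff ℝ 1 f)
    (hnonneg : ∀ p ∈ energyDom, p.2 ≠ 0 → 0 ≤ ohIntegrand α f p.1 p.2) :
    oharaER α f = ∫ p in energyDom, ohIntegrand α f p.1 p.2 := by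
  have hmeas := measurable_ohIntegrand hf α
  rw [integral_eq_lintegral_of_nonneg_ae _ hmeas.aestronglyMeasurable, oharaER, oharaE, energyDom,
    Measure.volume_eq_prod, ← Measure.prod_restrict, lintegral_prod _ (by fun_prop)]
  filter_upwards [ae_restrict_mem measurableSet_energyDom, ae_restrict_of_ae ae_snd_ne_zero]
    with p hp hp0 using hnonneg p hp hp0

lemma aecover_truncDom : AECover (volume.restrict energyDom) (𝓝[>] (0 : ℝ)) truncDom := by
  refine ⟨?_, measurableSet_truncDom⟩
  filter_upwards [ae_restrict_mem measurableSet_energyDom, ae_restrict_of_ae ae_snd_ne_zero]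
    with p hp hp0
  filter_upwards [Ioo_mem_nhdsGT (abs_pos.2 hp0)] with ε hε
  refine ⟨hp.1, ?_, hp.2⟩
  rcases le_abs.1 hε.2.le with hpos | hneg
  · exact Or.inr ⟨hpos, hp.2.2.le⟩
  · exact Or.inl ⟨hp.2.1.le, by linarith⟩

lemma tendsto_setIntegral_truncDom {E : Type*} [NormedAddCommGroup E] [NormedSpace ℝ E]
    {F : ℝ × ℝ → E} (hF : IntegrableOn F energyDom) :
    Tendsto (fun ε => ∫ p in truncDom ε, F p) (𝓝[>] 0) (𝓝 (∫ p in energyDom, F p)) := by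
  refine (aecover_truncDom.integral_tendsto_of_countably_generated hF).congr fun ε => ?_
  rw [Measure.restrict_restrict (measurableSet_truncDom ε),
    inter_eq_left.2 (truncDom_subset_energyDom ε)]

lemma integrableOn_meanSqOsc_deriv_div {α : ℝ} (hα : 1 ≤ α) {f g : ℝ → Rn n}
    (hf : MemH1 ((α - 1) / 2) f) (hg : MemH1 ((α - 1) / 2) g) :
    IntegrableOn (fun p : ℝ × ℝ =>
      meanSqOsc (fun x => (deriv f x, deriv g x)) p.1 p.2 / |p.2| ^ α) energyDom := by
  obtain ⟨hf_per, hf_diff, hf_fin⟩ := hf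
  obtain ⟨hg_per, hg_diff, hg_fin⟩ := hg
  have hf' : Continuous (deriv f) := hf_diff.continuous_deriv le_rfl
  have hg' : Continuous (deriv g) := hg_diff.continuous_deriv le_rfl
  have hfin : gagliardoSq ((α - 1) / 2) (fun x => (deriv f x, deriv g x)) < ⊤ :=
    (gagliardoSq_prodMk_le hf' _).trans_lt (ENNReal.add_lt_top.2 ⟨hf_fin, hg_fin⟩)
  have hper : Function.Periodic (fun x => (deriv f x, deriv g x)) 1 := fun x =>
    Prod.ext (periodic_deriv hf_per x) (periodic_deriv hg_per x)
  have := integrableOn_meanSqOsc_div (hf'.prodMk hg') hper (by linarith) hfin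
  rwa [show 1 + 2 * ((α - 1) / 2) = α by ring] at this

namespace VariationBounds

variable {γ h : ℝ → Rn n} {c K r α : ℝ}

lemma exists_integrableOn_lipBound_ohIntegrand (B : VariationBounds γ h c K r) (hα : 1 ≤ α)
    (hγ : MemH1 ((α - 1) / 2) γ) (hh : MemH1 ((α - 1) / 2) h) :
    ∃ bound : ℝ × ℝ → ℝ, IntegrableOn bound energyDom ∧ ∀ p ∈ energyDom,
      LipBound r (bound p) (fun τ => ohIntegrand α (γ + τ • h) p.1 p.2) := by
  obtain ⟨C, hC⟩ := B.exists_lipBound_ohIntegrand (zero_le_one.trans hα)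
  refine ⟨fun p => C * (meanSqOsc (fun x => (deriv γ x, deriv h x)) p.1 p.2 / |p.2| ^ α + 1),
    ?_, fun p hp => hC p.1 p.2 (abs_snd_le_of_mem_energyDom hp)⟩
  exact ((integrableOn_meanSqOsc_deriv_div hα hγ hh).add
    (integrableOn_const volume_energyDom_ne_top)).const_mul C

lemma ae_differentiableAt_ohIntegrand (B : VariationBounds γ h c K r) (α : ℝ) :
    ∀ᵐ p ∂volume.restrict energyDom,
      DifferentiableAt ℝ (fun τ : ℝ => ohIntegrand α (γ + τ • h) p.1 p.2) 0 := by
  filter_upwards [ae_restrict_mem measurableSet_energyDom, ae_restrict_of_ae ae_snd_ne_zero,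
    ae_restrict_of_ae (ae_arcLen_ne B.contDiff B.regularCurve (curveLen γ / 2))] with p hp hp0 htie
  exact B.differentiableAt_ohIntegrand α (abs_snd_le_of_mem_energyDom hp) hp0 htie

lemma integrableOn_ohIntegrand (B : VariationBounds γ h c K r) (hα : 1 ≤ α)
    (hγ : MemH1 ((α - 1) / 2) γ) (hh : MemH1 ((α - 1) / 2) h) {τ : ℝ} (hτ : |τ| ≤ r) :
    IntegrableOn (fun p : ℝ × ℝ => ohIntegrand α (γ + τ • h) p.1 p.2) energyDom := by
  obtain ⟨bound, hbound, hlip⟩ := B.exists_integrableOn_lipBound_ohIntegrand hα hγ hh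
  exact LipBound.integrable (F := fun (τ : ℝ) (p : ℝ × ℝ) => ohIntegrand α (γ + τ • h) p.1 p.2)
    (measurable_ohIntegrand (B.contDiff_add_smul τ) α).aestronglyMeasurable hbound
    (ae_restrict_of_forall_mem measurableSet_energyDom hlip) hτ

lemma integrableOn_deriv_and_hasDerivAt_setIntegral_ohIntegrand (B : VariationBounds γ h c K r)
    (hα : 1 ≤ α) (hγ : MemH1 ((α - 1) / 2) γ) (hh : MemH1 ((α - 1) / 2) h) {S : Set (ℝ × ℝ)}
    (hS : S ⊆ energyDom) :
    IntegrableOn (fun p => deriv (fun τ : ℝ => ohIntegrand α (γ + τ • h) p.1 p.2) 0) S ∧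
      HasDerivAt (fun τ : ℝ => ∫ p in S, ohIntegrand α (γ + τ • h) p.1 p.2)
        (∫ p in S, deriv (fun τ : ℝ => ohIntegrand α (γ + τ • h) p.1 p.2) 0) 0 := by
  obtain ⟨bound, hbound, hlip⟩ := B.exists_integrableOn_lipBound_ohIntegrand hα hγ hh
  exact integrable_deriv_and_hasDerivAt_integral_of_lipBound B.r_pos
    (F := fun (τ : ℝ) (p : ℝ × ℝ) => ohIntegrand α (γ + τ • h) p.1 p.2)
    (fun τ => (measurable_ohIntegrand (B.contDiff_add_smul τ) α).aestronglyMeasurable)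
    (hbound.mono_set hS) (ae_restrict_of_ae_restrict_of_subset hS
      (ae_restrict_of_forall_mem measurableSet_energyDom hlip))
    (ae_restrict_of_ae_restrict_of_subset hS (B.ae_differentiableAt_ohIntegrand α))

lemma oharaER_add_smul (B : VariationBounds γ h c K r) (hα : 0 ≤ α) {τ : ℝ} (hτ : |τ| ≤ r) :
    oharaER α (γ + τ • h) = ∫ p in energyDom, ohIntegrand α (γ + τ • h) p.1 p.2 :=
  oharaER_eq (B.contDiff_add_smul τ) fun p hp hp0 => by
    have hw := abs_snd_le_of_mem_energyDom hp
    exact ohIntegrand_nonneg (B.contDiff_add_smul τ) (B.periodic_add_smul τ) hα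
      (hw.trans (by norm_num)) (B.add_smul_ne hτ hw hp0)

end VariationBounds

lemma hasDirDeriv_of_hasDerivAt {F : (ℝ → Rn n) → ℝ} {γ h : ℝ → Rn n} {φ : ℝ → ℝ} {d r : ℝ}
    (hφ : HasDerivAt φ d 0) (hr : 0 < r) (hF : ∀ τ, |τ| ≤ r → F (γ + τ • h) = φ τ) :
    HasDirDeriv F γ h d := by
  have hsmall : ∀ᶠ τ : ℝ in 𝓝[≠] 0, |τ| ≤ r := nhdsWithin_le_nhds <|
    (continuous_abs.tendsto (0 : ℝ)).eventually_le_const (by rwa [abs_zero])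
  have h0 : F γ = φ 0 := by simpa using hF 0 (by simpa using hr.le)
  refine hφ.tendsto_slope_zero.congr' (hsmall.mono fun τ hτ => ?_)
  simp only [hF τ hτ, h0, zero_add, smul_eq_mul, div_eq_inv_mul]

end Energy

theorem statement9_general {n : ℕ} {α : ℝ} (hα : 1 ≤ α) {γ₀ : ℝ → Rn n}
    (hγ₀ : MemH1 ((α - 1) / 2) γ₀) (hinj : PerInjective γ₀) (hreg : RegularCurve γ₀)
    {h : ℝ → Rn n} (hh : MemH1 ((α - 1) / 2) h) :
    ∃ d : ℝ, ∃ dE : ℝ → ℝ,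
      HasDirDeriv (oharaER α) γ₀ h d ∧
      (∀ ε : ℝ, 0 < ε → HasDirDeriv (oharaEeps α ε) γ₀ h (dE ε)) ∧
      Tendsto dE (𝓝[>] (0 : ℝ)) (𝓝 d) := by
  obtain ⟨c, K, r, B⟩ :=
    VariationBounds.exists_of_perInjective_of_regularCurve hγ₀.2.1 hh.2.1 hγ₀.1 hh.1 hinj hreg
  have hderiv := fun S (hS : S ⊆ energyDom) =>
    B.integrableOn_deriv_and_hasDerivAt_setIntegral_ohIntegrand hα hγ₀ hh hS
  refine ⟨_, fun ε => _, ?_, fun ε hε => ?_,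
    tendsto_setIntegral_truncDom (hderiv energyDom subset_rfl).1⟩
  · exact hasDirDeriv_of_hasDerivAt (hderiv energyDom subset_rfl).2 B.r_pos fun τ hτ =>
      B.oharaER_add_smul (zero_le_one.trans hα) hτ
  · exact hasDirDeriv_of_hasDerivAt (hderiv _ (truncDom_subset_energyDom ε)).2 B.r_pos fun τ hτ =>
      oharaEeps_eq hε (B.integrableOn_ohIntegrand hα hγ₀ hh hτ)

/-- For an injective regular `γ₀ ∈ H^{(1+α)/2,2}` and `h ∈ H^{(1+α)/2,2}`,
the directional derivative `δE^α(γ₀;h)` exists and `δE^α(γ₀;h) = lim_{ε↘0} δE^α_ε(γ₀;h)`. -/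
theorem statement9 {n : ℕ} (hn : 2 ≤ n) {α : ℝ} (hα : α ∈ Ioo (2:ℝ) 3)
    {γ₀ : ℝ → Rn n} (hγ₀ : MemH1 ((α - 1) / 2) γ₀) (hinj : PerInjective γ₀)
    (hreg : RegularCurve γ₀) {h : ℝ → Rn n} (hh : MemH1 ((α - 1) / 2) h) :
    ∃ d : ℝ, ∃ dE : ℝ → ℝ,
      HasDirDeriv (oharaER α) γ₀ h d ∧
      (∀ ε : ℝ, 0 < ε → HasDirDeriv (oharaEeps α ε) γ₀ h (dE ε)) ∧
      Tendsto dE (𝓝[>] (0:ℝ)) (𝓝 d) := by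
  exact statement9_general (by linarith [hα.1]) hγ₀ hinj hreg hh

end
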